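/- Let n ≥ 1 and let K be a smooth, strictly convex body in ℝ^{n+1} with positive support function h on S^n. Set M := max_{S^n} h(x)·det(A(x)+x⊗x) and m := min_{S^n} h(x)·det(A(x)+x⊗x) (so M = max h/𝒦, m = min h/𝒦). Then there exists a constant γ > 0 depending only on n such that δ₂(K̄, B) ≤ γ·(M/m − 1)^{1/2}, where K̄ = (K − c(K))/(⨍ h̃ dθ) is the translated and rescaled body. -/

import Mathlib

open MeasureTheory Metric Real
open scoped InnerProductSpace ENNReal Topology

noncomputable section

/-- Euclidean space `ℝ^{n+1}`. -/
abbrev Eu (n : ℕ) : Type := EuclideanSpace ℝ (Fin (n + 1))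

/-- The unit sphere `S^n ⊆ ℝ^{n+1}` as a subtype. -/
abbrev Sph (n : ℕ) : Type := Metric.sphere (0 : Eu n) 1

/-- The spherical Lebesgue (surface) measure on `S^n`. -/
def sphMeas (n : ℕ) : Measure (Sph n) := (volume : Measure (Eu n)).toSphere

/-- The support function of a set `K ⊆ ℝ^{n+1}`. -/
def sfn {n : ℕ} (K : Set (Eu n)) (z : Eu n) : ℝ :=
  sSup ((fun y => ⟪z, y⟫_ℝ) '' K)

/-- The Hessian endomorphism `A(x) = D(∇ h_K)(x)`. -/
def hessA {n : ℕ} (K : Set (Eu n)) (x : Eu n) : Eu n →L[ℝ] Eu n :=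
  fderiv ℝ (gradient (sfn K)) x

/-- The rank-one endomorphism `x ⊗ x : v ↦ ⟨v, x⟩ x`. -/
def tens {n : ℕ} (x : Eu n) : Eu n →L[ℝ] Eu n :=
  (innerSL ℝ x).smulRight x

/-- `det (A(x) + x ⊗ x)`, the reciprocal Gauss curvature `1/𝒦` at `x ∈ S^n`. -/
def rK {n : ℕ} (K : Set (Eu n)) (x : Eu n) : ℝ :=
  LinearMap.det ((hessA K x + tens x : Eu n →L[ℝ] Eu n) : Eu n →ₗ[ℝ] Eu n)

/-- `K` is a smooth, strictly convex body with positive support function. -/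
structure IsSmoothConvexBody {n : ℕ} (K : Set (Eu n)) : Prop where
  compact : IsCompact K
  convex : Convex ℝ K
  interior_nonempty : (interior K).Nonempty
  pos : ∀ x : Sph n, 0 < sfn K x
  smooth : ContDiffOn ℝ (⊤ : ℕ∞) (sfn K) {(0 : Eu n)}ᶜ
  posdef : ∀ x : Sph n, ∀ v : Eu n, v ≠ 0 →
    0 < ⟪(hessA K (x : Eu n) + tens (x : Eu n)) v, v⟫_ℝ

/-- The density `h·det(A + x⊗x)` of the measure `dV` with respect to `dθ`. -/
def dens {n : ℕ} (K : Set (Eu n)) (x : Eu n) : ℝ := sfn K x * rK K x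

/-- The centroid-type point `c(K) = (∫ ∇h_K dV)/(∫ dV)`. -/
def cK {n : ℕ} (K : Set (Eu n)) : Eu n :=
  (∫ x : Sph n, dens K x ∂sphMeas n)⁻¹ •
    ∫ x : Sph n, dens K x • gradient (sfn K) x ∂sphMeas n

/-- The support function of the translated body `K - c(K)`. -/
def tsfn {n : ℕ} (K : Set (Eu n)) (x : Eu n) : ℝ := sfn K x - ⟪x, cK K⟫_ℝ

/-!
Write `X = ∇h`, `c = c(K)` and `h̃ = h - ⟨·, c⟩`. The argument compares two Poincaré inequalities.

Star-shaped regions spanned by the segments `[0, ρ(x) X(x)]` have volume proportional to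
`∫ ρ^{n+1} dV`. Applying the Brunn–Minkowski inequality, in the form of Prékopa–Leindler, to
`ρ = 1 ± εf` and expanding to second order in `ε` gives a Poincaré inequality for the measure `dV`.
Tested on the coordinates of `X - c`, whose `dV`-means vanish by the choice of `c`, it reads
`n ∫ |X - c|² dV ≤ ∫ h tr A dV`. The same inequality for the unit ball is the Poincaré inequality
of the sphere, `n ∫ (h̃ - a)² dθ ≤ ∫ (|X - c|² - h̃²) dθ` with `a = ⨍ h̃ dθ`. The two are linked by
the divergence theorem, which gives `∫ (|X - c|² + h tr A) dθ = (n + 1) ∫ h̃² dθ`.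

Replacing `dV` by the bounds `m dθ ≤ dV ≤ M dθ` and eliminating `|X - c|²` leaves
`(n + 1) m ∫ (h̃ - a)² dθ ≤ (M - m) ∫ a² dθ`, hence the constant `γ = (n + 1)^{-1/2}`.
-/

section PrekopaLeindler

open scoped Pointwise

theorem volume_add_volume_le_volume_add_of_isCompact {K L : Set ℝ}
    (hK : IsCompact K) (hK' : K.Nonempty) (hL : IsCompact L) (hL' : L.Nonempty) :
    volume K + volume L ≤ volume (K + L) := by
  obtain ⟨a, haK, ha⟩ := hK.exists_isGreatest hK'
  obtain ⟨b, hbL, hb⟩ := hL.exists_isLeast hL'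
  have hdisj : AEDisjoint volume (K + {b}) ({a} + L) := by
    refine measure_mono_null (t := {a + b}) ?_ (by simp)
    rintro z ⟨⟨x, hx, b', hb', hxz⟩, ⟨a', ha', y, hy, hyz⟩⟩
    have hxa : x ≤ a := ha hx
    have hby : b ≤ y := hb hy
    simp only [Set.mem_singleton_iff] at ha' hb' hxz hyz ⊢
    linarith
  calc volume K + volume L = volume (K + {b}) + volume ({a} + L) := by simp
    _ = volume (K + {b} ∪ ({a} + L)) :=
        (measure_union₀ (isCompact_singleton.add hL).measurableSet.nullMeasurableSet hdisj).symm
    _ ≤ volume (K + L) := by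
        gcongr
        exact Set.union_subset (by gcongr; simpa) (by gcongr; simpa)

theorem volume_add_volume_le_volume_add {A B : Set ℝ} (hA : MeasurableSet A) (hB : MeasurableSet B)
    (hA' : A.Nonempty) (hB' : B.Nonempty) : volume A + volume B ≤ volume (A + B) := by
  obtain ⟨a, ha⟩ := hA'
  obtain ⟨b, hb⟩ := hB'
  rw [hA.measure_eq_iSup_isCompact, hB.measure_eq_iSup_isCompact]
  simp only [iSup_and']
  refine ENNReal.biSup_add_biSup_le' ⟨∅, by simp⟩ ⟨∅, by simp⟩ ?_
  rintro K ⟨hKA, hK⟩ L ⟨hLB, hL⟩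
  calc volume K + volume L ≤ volume (insert a K) + volume (insert b L) := by
        gcongr <;> exact Set.subset_insert _ _
    _ ≤ volume (insert a K + insert b L) :=
        volume_add_volume_le_volume_add_of_isCompact (hK.insert a) (by simp) (hL.insert b) (by simp)
    _ ≤ volume (A + B) := by
        gcongr
        exacts [Set.insert_subset ha hKA, Set.insert_subset hb hLB]

theorem lintegral_eq_lintegral_meas_ofReal_lt {α : Type*} [MeasurableSpace α] (μ : Measure α)
    {f : α → ℝ≥0∞} (hf : Measurable f) (hf' : ∀ x, f x ≠ ∞) :
    ∫⁻ x, f x ∂μ = ∫⁻ u in Set.Ioi (0 : ℝ), μ {x | ENNReal.ofReal u < f x} := by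
  calc ∫⁻ x, f x ∂μ = ∫⁻ x, ENNReal.ofReal (f x).toReal ∂μ := by
        simp only [ENNReal.ofReal_toReal (hf' _)]
    _ = ∫⁻ u in Set.Ioi (0 : ℝ), μ {x | u < (f x).toReal} :=
        lintegral_eq_lintegral_meas_lt μ (ae_of_all _ fun _ => ENNReal.toReal_nonneg)
          hf.ennreal_toReal.aemeasurable
    _ = ∫⁻ u in Set.Ioi (0 : ℝ), μ {x | ENNReal.ofReal u < f x} :=
        setLIntegral_congr_fun measurableSet_Ioi fun u (hu : 0 < u) => by
          simp only [ENNReal.ofReal_lt_iff_lt_toReal hu.le (hf' _)]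

/-- The Prékopa–Leindler inequality for the measure `μ`. -/
def PrekopaLeindler {E : Type*} [MeasurableSpace E] [AddCommGroup E] [Module ℝ E]
    (μ : Measure E) : Prop :=
  ∀ ⦃s t : ℝ⦄, 0 < s → 0 < t → s + t = 1 → ∀ ⦃f g h : E → ℝ≥0∞⦄,
    Measurable f → Measurable g → Measurable h →
    (∀ x y, f x ^ s * g y ^ t ≤ h (s • x + t • y)) →
    (∫⁻ x, f x ∂μ) ^ s * (∫⁻ x, g x ∂μ) ^ t ≤ ∫⁻ x, h x ∂μ

variable {s t : ℝ}

theorem superlevel_add_superlevel_subset (hs : 0 < s) (ht : 0 < t) (hst : s + t = 1) {E : Type*}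
    [AddCommGroup E] [Module ℝ E] {f g h : E → ℝ≥0∞}
    (hfg : ∀ x y, f x ^ s * g y ^ t ≤ h (s • x + t • y)) (u : ℝ≥0∞) :
    s • {x | u < f x} + t • {x | u < g x} ⊆ {x | u < h x} := by
  rintro _ ⟨_, ⟨x, hx : u < f x, rfl⟩, _, ⟨y, hy : u < g y, rfl⟩, rfl⟩
  calc u = u ^ s * u ^ t := by
        rw [← ENNReal.rpow_add_of_nonneg _ _ hs.le ht.le, hst, ENNReal.rpow_one]
    _ < f x ^ s * g y ^ t := ENNReal.mul_lt_mul (by gcongr) (by gcongr)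
    _ ≤ h (s • x + t • y) := hfg x y

theorem add_volume_superlevel_le (hs : 0 < s) (ht : 0 < t) (hst : s + t = 1)
    {f g h : ℝ → ℝ≥0∞} (hf : Measurable f) (hg : Measurable g)
    (hfg : ∀ x y, f x ^ s * g y ^ t ≤ h (s • x + t • y)) {u : ℝ≥0∞} (hfu : u < ⨆ x, f x)
    (hgu : u < ⨆ x, g x) :
    ENNReal.ofReal s * volume {x | u < f x} + ENNReal.ofReal t * volume {x | u < g x} ≤
      volume {x | u < h x} := by
  have hf_ne : {x | u < f x}.Nonempty := lt_iSup_iff.1 hfu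
  have hg_ne : {x | u < g x}.Nonempty := lt_iSup_iff.1 hgu
  calc _ = volume (s • {x | u < f x}) + volume (t • {x | u < g x}) := by
        simp [Measure.addHaar_smul, abs_of_pos, hs, ht]
    _ ≤ volume (s • {x | u < f x} + t • {x | u < g x}) := volume_add_volume_le_volume_add
        ((measurableSet_lt measurable_const hf).const_smul₀ s)
        ((measurableSet_lt measurable_const hg).const_smul₀ t) hf_ne.smul_set hg_ne.smul_set
    _ ≤ volume {x | u < h x} := measure_mono (superlevel_add_superlevel_subset hs ht hst hfg u)

theorem add_lintegral_le_of_iSup_eq_one (hs : 0 < s) (ht : 0 < t) (hst : s + t = 1)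
    {f g h : ℝ → ℝ≥0∞} (hf : Measurable f) (hg : Measurable g) (hh : Measurable h)
    (hf1 : (⨆ x, f x) = 1) (hg1 : (⨆ x, g x) = 1)
    (hfg : ∀ x y, f x ^ s * g y ^ t ≤ h (s • x + t • y)) :
    ENNReal.ofReal s * (∫⁻ x, f x) + ENNReal.ofReal t * ∫⁻ x, g x ≤ ∫⁻ x, h x := by
  have hf_le (x : ℝ) : f x ≤ 1 := hf1 ▸ le_iSup f x
  have hg_le (x : ℝ) : g x ≤ 1 := hg1 ▸ le_iSup g x
  have hfg' (x y : ℝ) : f x ^ s * g y ^ t ≤ min (h (s • x + t • y)) 1 :=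
    le_min (hfg x y) <| mul_le_one' (ENNReal.rpow_le_one (hf_le x) hs.le)
      (ENNReal.rpow_le_one (hg_le y) ht.le)
  have hlevel (u : ℝ) : ENNReal.ofReal s * volume {x | ENNReal.ofReal u < f x} +
      ENNReal.ofReal t * volume {x | ENNReal.ofReal u < g x} ≤
        volume {x | ENNReal.ofReal u < min (h x) 1} := by
    rcases lt_or_ge (ENNReal.ofReal u) 1 with hu | hu
    · exact add_volume_superlevel_le hs ht hst hf hg hfg' (hf1 ▸ hu) (hg1 ▸ hu)
    · simp [((hf_le _).trans hu).not_gt, ((hg_le _).trans hu).not_gt]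
  have hf_anti : Antitone fun u : ℝ => volume {x | ENNReal.ofReal u < f x} := fun u v huv =>
    measure_mono fun x (hx : _ < f x) => (ENNReal.ofReal_le_ofReal huv).trans_lt hx
  calc ENNReal.ofReal s * (∫⁻ x, f x) + ENNReal.ofReal t * ∫⁻ x, g x
      = ∫⁻ u in Set.Ioi (0 : ℝ), (ENNReal.ofReal s * volume {x | ENNReal.ofReal u < f x} +
          ENNReal.ofReal t * volume {x | ENNReal.ofReal u < g x}) := by
        rw [lintegral_add_left' (hf_anti.measurable.const_mul _).aemeasurable,
          lintegral_const_mul' _ _ ENNReal.ofReal_ne_top,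
          lintegral_const_mul' _ _ ENNReal.ofReal_ne_top,
          lintegral_eq_lintegral_meas_ofReal_lt _ hf fun x => ((hf_le x).trans_lt (by simp)).ne,
          lintegral_eq_lintegral_meas_ofReal_lt _ hg fun x => ((hg_le x).trans_lt (by simp)).ne]
    _ ≤ ∫⁻ u in Set.Ioi (0 : ℝ), volume {x | ENNReal.ofReal u < min (h x) 1} :=
        lintegral_mono hlevel
    _ = ∫⁻ x, min (h x) 1 :=
        (lintegral_eq_lintegral_meas_ofReal_lt _ (hh.min measurable_const) fun x =>
          ne_top_of_le_ne_top (by simp) (min_le_right _ 1)).symm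
    _ ≤ ∫⁻ x, h x := lintegral_mono fun x => min_le_left _ _

theorem rpow_mul_rpow_le_add (hs : 0 < s) (ht : 0 < t) (hst : s + t = 1) (a b : ℝ≥0∞) :
    a ^ s * b ^ t ≤ ENNReal.ofReal s * a + ENNReal.ofReal t * b := by
  have hpq : s⁻¹.HolderConjugate t⁻¹ :=
    Real.holderConjugate_iff.2 ⟨(one_lt_inv₀ hs).2 (by linarith), by simpa⟩
  have := ENNReal.young_inequality (a ^ s) (b ^ t) hpq
  rwa [← ENNReal.rpow_mul, mul_inv_cancel₀ hs.ne', ENNReal.rpow_one, ← ENNReal.rpow_mul,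
    mul_inv_cancel₀ ht.ne', ENNReal.rpow_one, ENNReal.ofReal_inv_of_pos hs,
    ENNReal.ofReal_inv_of_pos ht, div_eq_mul_inv, div_eq_mul_inv, inv_inv, inv_inv, mul_comm a,
    mul_comm b] at this

theorem prekopaLeindler_real_of_iSup_ne_top (hs : 0 < s) (ht : 0 < t) (hst : s + t = 1)
    {f g h : ℝ → ℝ≥0∞} (hf : Measurable f) (hg : Measurable g) (hh : Measurable h)
    (hf' : (⨆ x, f x) ≠ ∞) (hg' : (⨆ x, g x) ≠ ∞)
    (hfg : ∀ x y, f x ^ s * g y ^ t ≤ h (s • x + t • y)) :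
    (∫⁻ x, f x) ^ s * (∫⁻ x, g x) ^ t ≤ ∫⁻ x, h x := by
  set a := ⨆ x, f x
  set b := ⨆ x, g x
  have hfa (x : ℝ) : f x ≤ a := le_iSup f x
  have hgb (x : ℝ) : g x ≤ b := le_iSup g x
  rcases eq_or_ne a 0 with ha0 | ha0
  · simp [le_bot_iff.1 (ha0 ▸ hfa _), hs]
  rcases eq_or_ne b 0 with hb0 | hb0
  · simp [le_bot_iff.1 (hb0 ▸ hgb _), ht]
  set c := a ^ s * b ^ t with hc
  have hc0 : c ≠ 0 := by simp [hc, ha0, hb0, hf', hg']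
  have hc' : c ≠ ∞ := by simp [hc, ENNReal.mul_eq_top, ha0, hb0, hf', hg']
  have hdiv (u v : ℝ≥0∞) : (a⁻¹ * u) ^ s * (b⁻¹ * v) ^ t = c⁻¹ * (u ^ s * v ^ t) := by
    rw [ENNReal.mul_rpow_of_nonneg _ _ hs.le, ENNReal.mul_rpow_of_nonneg _ _ ht.le, hc,
      ENNReal.mul_inv (by simp [ha0, hf']) (by simp [hb0, hg']), ENNReal.inv_rpow, ENNReal.inv_rpow]
    ring
  have hnorm := add_lintegral_le_of_iSup_eq_one hs ht hst (hf.const_mul a⁻¹) (hg.const_mul b⁻¹)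
    (hh.const_mul c⁻¹) (by rw [← ENNReal.mul_iSup, ENNReal.inv_mul_cancel ha0 hf'])
    (by rw [← ENNReal.mul_iSup, ENNReal.inv_mul_cancel hb0 hg'])
    (fun x y => by rw [hdiv]; gcongr; exact hfg x y)
  rw [lintegral_const_mul _ hf, lintegral_const_mul _ hg, lintegral_const_mul _ hh] at hnorm
  have hmul := (rpow_mul_rpow_le_add hs ht hst _ _).trans hnorm
  rw [hdiv] at hmul
  exact (ENNReal.mul_le_mul_iff_right (by simpa) (by simpa)).1 hmul

theorem lintegral_eq_iSup_lintegral_min_natCast {α : Type*} [MeasurableSpace α] (μ : Measure α)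
    {f : α → ℝ≥0∞} (hf : Measurable f) : ∫⁻ x, f x ∂μ = ⨆ k : ℕ, ∫⁻ x, min (f x) k ∂μ := by
  have hmono : Monotone fun (k : ℕ) x => min (f x) k := fun i j hij x =>
    min_le_min_left _ (Nat.cast_le.2 hij)
  rw [← lintegral_iSup (fun k => by fun_prop) hmono]
  simp [← inf_iSup_eq, ENNReal.iSup_natCast]

theorem prekopaLeindler_real : PrekopaLeindler (volume : Measure ℝ) := by
  intro s t hs ht hst f g h hf hg hh hfg
  have htrunc (i j : ℕ) : (∫⁻ x, min (f x) i) ^ s * (∫⁻ x, min (g x) j) ^ t ≤ ∫⁻ x, h x := by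
    refine prekopaLeindler_real_of_iSup_ne_top hs ht hst (by fun_prop) (by fun_prop) hh
      (ne_top_of_le_ne_top (ENNReal.natCast_ne_top i) <| iSup_le fun x => min_le_right _ _)
      (ne_top_of_le_ne_top (ENNReal.natCast_ne_top j) <| iSup_le fun x => min_le_right _ _)
      fun x y => le_trans ?_ (hfg x y)
    gcongr <;> exact min_le_left _ _
  rw [lintegral_eq_iSup_lintegral_min_natCast _ hf, lintegral_eq_iSup_lintegral_min_natCast _ hg,
    ← ENNReal.orderIsoRpow_apply s hs, ← ENNReal.orderIsoRpow_apply t ht, OrderIso.map_iSup,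
    OrderIso.map_iSup, ENNReal.iSup_mul]
  simp only [ENNReal.mul_iSup]
  exact iSup₂_le htrunc

variable {E F : Type*} [MeasurableSpace E] [AddCommGroup E] [Module ℝ E] [MeasurableSpace F]
  [AddCommGroup F] [Module ℝ F] {μ : Measure E} {ν : Measure F}

namespace PrekopaLeindler

theorem prod [SFinite ν] (hμ : PrekopaLeindler μ) (hν : PrekopaLeindler ν) :
    PrekopaLeindler (μ.prod ν) := by
  intro s t hs ht hst f g h hf hg hh hfg
  rw [lintegral_prod _ hf.aemeasurable, lintegral_prod _ hg.aemeasurable,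
    lintegral_prod _ hh.aemeasurable]
  exact hμ hs ht hst hf.lintegral_prod_right' hg.lintegral_prod_right' hh.lintegral_prod_right'
    fun x y => hν hs ht hst (by fun_prop) (by fun_prop) (by fun_prop) fun a b => hfg (x, a) (y, b)

theorem of_measurePreserving (hμ : PrekopaLeindler μ) (e : E →ₗ[ℝ] F)
    (he : MeasurePreserving e μ ν) : PrekopaLeindler ν := by
  intro s t hs ht hst f g h hf hg hh hfg
  rw [← he.lintegral_comp hf, ← he.lintegral_comp hg, ← he.lintegral_comp hh]
  exact hμ hs ht hst (hf.comp he.measurable) (hg.comp he.measurable) (hh.comp he.measurable)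
    fun x y => by simpa using hfg (e x) (e y)

theorem mul_measure_le (hμ : PrekopaLeindler μ) {s t : ℝ} (hs : 0 < s) (ht : 0 < t)
    (hst : s + t = 1) {A B C : Set E} (hA : MeasurableSet A) (hB : MeasurableSet B)
    (hC : MeasurableSet C) (hABC : s • A + t • B ⊆ C) : μ A ^ s * μ B ^ t ≤ μ C := by
  rw [← lintegral_indicator_one hA, ← lintegral_indicator_one hB, ← lintegral_indicator_one hC]
  refine hμ hs ht hst (measurable_one.indicator hA) (measurable_one.indicator hB)
    (measurable_one.indicator hC) fun x y => ?_
  by_cases hx : x ∈ A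
  · by_cases hy : y ∈ B
    · have hxy : s • x + t • y ∈ C :=
        hABC (Set.add_mem_add (Set.smul_mem_smul_set hx) (Set.smul_mem_smul_set hy))
      simp [hx, hy, hxy]
    · simp [hy, ht]
  · simp [hx, hs]

end PrekopaLeindler

theorem prekopaLeindler_pi (n : ℕ) : PrekopaLeindler (volume : Measure (Fin n → ℝ)) := by
  induction n with
  | zero =>
    intro s t _ _ _ f g h _ _ _ hfg
    have hint (u : (Fin 0 → ℝ) → ℝ≥0∞) : ∫⁻ x, u x = u 0 := by
      simp [volume_pi, Measure.pi_of_empty (x := 0)]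
    simpa [hint] using hfg 0 0
  | succ n ih =>
    refine (prekopaLeindler_real.prod ih).of_measurePreserving
      (Fin.consLinearEquiv ℝ fun _ : Fin (n + 1) => ℝ).toLinearMap ?_
    convert! (volume_preserving_piFinSuccAbove (fun _ : Fin (n + 1) => ℝ) 0).symm
    ext x i
    refine Fin.cases ?_ (fun j => ?_) i <;> simp [MeasurableEquiv.piFinSuccAbove]

theorem prekopaLeindler_volume (E : Type*) [NormedAddCommGroup E] [InnerProductSpace ℝ E]
    [FiniteDimensional ℝ E] [MeasurableSpace E] [BorelSpace E] :
    PrekopaLeindler (volume : Measure E) :=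
  ((prekopaLeindler_pi _).of_measurePreserving (WithLp.linearEquiv 2 ℝ _).symm.toLinearMap
    (PiLp.volume_preserving_toLp _)).of_measurePreserving
    (stdOrthonormalBasis ℝ E).repr.symm.toLinearEquiv.toLinearMap
    (stdOrthonormalBasis ℝ E).measurePreserving_repr_symm

end PrekopaLeindler

section Polar

open Module (finrank)

variable {E : Type*} [NormedAddCommGroup E] [NormedSpace ℝ E] [FiniteDimensional ℝ E]
  [MeasurableSpace E] [BorelSpace E]

theorem measurableEmbedding_polar :
    MeasurableEmbedding fun p : sphere (0 : E) 1 × Set.Ioi (0 : ℝ) => (p.2 : ℝ) • (p.1 : E) :=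
  (MeasurableEmbedding.subtype_coe (measurableSet_singleton (0 : E)).compl).comp
    (homeomorphUnitSphereProd E).symm.measurableEmbedding

variable [Nontrivial E] (μ : Measure E) [μ.IsAddHaarMeasure]

theorem measurePreserving_polar :
    MeasurePreserving (fun p : sphere (0 : E) 1 × Set.Ioi (0 : ℝ) => (p.2 : ℝ) • (p.1 : E))
      (μ.toSphere.prod (.volumeIoiPow (finrank ℝ E - 1))) μ := by
  have hval := measurePreserving_subtype_coe (μa := μ) (measurableSet_singleton (0 : E)).compl
  rw [restrict_compl_singleton] at hval
  exact hval.comp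
    ((μ.measurePreserving_homeomorphUnitSphereProd).symm
      (homeomorphUnitSphereProd E).toMeasurableEquiv)

theorem integral_volumeIoiPow (n : ℕ) (ψ : ℝ → ℝ) :
    ∫ r, ψ r ∂Measure.volumeIoiPow n = ∫ r in Set.Ioi (0 : ℝ), r ^ n * ψ r := by
  rw [Measure.volumeIoiPow, integral_withDensity_eq_integral_toReal_smul (by fun_prop) (by simp)]
  rw [← integral_subtype_comap measurableSet_Ioi fun r => r ^ n * ψ r]
  exact integral_congr_ae <| ae_of_all _ fun r => by
    simp [ENNReal.toReal_ofReal (pow_nonneg (le_of_lt r.2) n)]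

theorem integral_eq_integral_toSphere_mul {F : E → ℝ} {ψ : ℝ → ℝ} {g : sphere (0 : E) 1 → ℝ}
    (hF : ∀ (x : sphere (0 : E) 1) (r : ℝ), 0 < r → F (r • (x : E)) = ψ r * g x) :
    ∫ z, F z ∂μ = (∫ r in Set.Ioi (0 : ℝ), r ^ (finrank ℝ E - 1) * ψ r) * ∫ x, g x ∂μ.toSphere := by
  rw [← (measurePreserving_polar μ).integral_comp measurableEmbedding_polar,
    ← integral_volumeIoiPow, mul_comm, ← integral_prod_mul]
  exact integral_congr_ae <| ae_of_all _ fun p => (hF p.1 p.2 p.2.2).trans (mul_comm _ _)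

end Polar

section InnerProductSpace

variable {E : Type*} [NormedAddCommGroup E] [InnerProductSpace ℝ E]

theorem det_pos_of_isSymmetric [FiniteDimensional ℝ E] {T : E →ₗ[ℝ] E} (hT : T.IsSymmetric)
    (hpos : ∀ v ≠ 0, 0 < ⟪T v, v⟫_ℝ) : 0 < LinearMap.det T := by
  rw [hT.det_eq_prod_eigenvalues rfl]
  refine Finset.prod_pos fun i _ => ?_
  have hv := hpos _ ((hT.eigenvectorBasis rfl).orthonormal.ne_zero i)
  rw [hT.apply_eigenvectorBasis, real_inner_smul_left, real_inner_self_eq_norm_sq] at hv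
  exact pos_of_mul_pos_left hv (sq_nonneg _)

theorem det_add_smulRight {L : E →ₗ[ℝ] E} {x : E} (hx : ‖x‖ = 1)
    (hL : ∀ w, ⟪x, L w⟫_ℝ = 0) (v : E) [FiniteDimensional ℝ E] :
    LinearMap.det (L + (innerₛₗ ℝ x).smulRight v) =
      ⟪x, v⟫_ℝ * LinearMap.det (L + (innerₛₗ ℝ x).smulRight x) := by
  have hcomp : L + (innerₛₗ ℝ x).smulRight v =
      LinearMap.transvection (innerₛₗ ℝ x) (v - x) * (L + (innerₛₗ ℝ x).smulRight x) := by
    ext w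
    simp [LinearMap.transvection, hL, inner_add_right, inner_smul_right, hx, smul_sub]
  rw [hcomp, map_mul, LinearMap.transvection.det]
  simp [inner_sub_right, hx]

theorem exists_norm_smul_mem_sphere_eq {z : E} (hz : z ≠ 0) :
    ∃ x : sphere (0 : E) 1, ‖z‖ • (x : E) = z :=
  ⟨⟨‖z‖⁻¹ • z, by simp [norm_smul, hz]⟩, smul_inv_smul₀ (norm_ne_zero_iff.2 hz) z⟩

theorem hasFDerivAt_norm {z : E} (hz : z ≠ 0) :
    HasFDerivAt (fun z : E => ‖z‖) (innerSL ℝ (‖z‖⁻¹ • z)) z := by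
  have h := (hasStrictFDerivAt_norm_sq z).hasFDerivAt.sqrt (by simpa using hz)
  simp only [Real.sqrt_sq (norm_nonneg _)] at h
  convert h using 1
  ext v
  simp only [map_smul, smul_apply, innerSL_apply_apply, smul_eq_mul, one_div, mul_inv_rev,
    nsmul_eq_mul, Nat.cast_ofNat]
  ring

variable [CompleteSpace E]

theorem gradient_eq_of_inner_le {f : E → ℝ} {y z : E} (hf : DifferentiableAt ℝ f z)
    (hle : ∀ w, ⟪w, y⟫_ℝ ≤ f w) (heq : ⟪z, y⟫_ℝ = f z) : gradient f z = y := by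
  have hmin : IsLocalMin (fun w => f w - innerSL ℝ y w) z :=
    Filter.Eventually.of_forall fun w => by
      simpa [real_inner_comm _ y, heq] using hle w
  have hdual := hmin.hasFDerivAt_eq_zero
    (hf.hasGradientAt.hasFDerivAt.sub (innerSL ℝ y).hasFDerivAt)
  exact (InnerProductSpace.toDual ℝ E).injective (sub_eq_zero.1 hdual)

theorem inner_fderiv_gradient {f : E → ℝ} {z : E} (v w : E) :
    ⟪fderiv ℝ (gradient f) z v, w⟫_ℝ = fderiv ℝ (fderiv ℝ f) z v w := by
  change ⟪fderiv ℝ ((InnerProductSpace.toDual ℝ E).symm.toContinuousLinearEquiv ∘ fderiv ℝ f) z v,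
    w⟫_ℝ = _
  rw [ContinuousLinearEquiv.comp_fderiv]
  exact InnerProductSpace.toDual_symm_apply

end InnerProductSpace

section Sphere

variable {n : ℕ}

instance : IsFiniteMeasure (sphMeas n) := inferInstanceAs (IsFiniteMeasure volume.toSphere)

instance : (sphMeas n).IsOpenPosMeasure := inferInstanceAs volume.toSphere.IsOpenPosMeasure

instance : Nonempty (Sph n) := (NormedSpace.sphere_nonempty.2 zero_le_one).to_subtype

theorem integrable_sphMeas {F : Type*} [NormedAddCommGroup F] {f : Sph n → F}
    (hf : Continuous f) : Integrable f (sphMeas n) :=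
  hf.integrable_of_hasCompactSupport (HasCompactSupport.of_compactSpace f)

theorem continuous_comp_coe_sphere {β : Type*} [TopologicalSpace β] {f : Eu n → β}
    (hf : ∀ z ≠ 0, ContinuousAt f z) : Continuous fun x : Sph n => f x :=
  continuous_iff_continuousAt.2 fun x =>
    ContinuousAt.comp' (hf x (ne_zero_of_mem_unit_sphere x)) continuous_subtype_val.continuousAt

theorem real_inner_self_sphere (x : Sph n) : ⟪(x : Eu n), (x : Eu n)⟫_ℝ = 1 := by
  simp

end Sphere

section SupportFunction

variable {n : ℕ} {K : Set (Eu n)}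

theorem exists_inner_eq_sfn (hK : IsCompact K) (hne : K.Nonempty) (z : Eu n) :
    ∃ y ∈ K, ⟪z, y⟫_ℝ = sfn K z :=
  (hK.image (by fun_prop : Continuous fun y => ⟪z, y⟫_ℝ)).sSup_mem (hne.image _)

theorem inner_le_sfn (hK : IsCompact K) (z : Eu n) {y : Eu n} (hy : y ∈ K) :
    ⟪z, y⟫_ℝ ≤ sfn K z :=
  le_csSup (hK.image (by fun_prop : Continuous fun y => ⟪z, y⟫_ℝ)).bddAbove ⟨y, hy, rfl⟩

theorem sfn_add_le (hK : IsCompact K) (hne : K.Nonempty) (z w : Eu n) :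
    sfn K (z + w) ≤ sfn K z + sfn K w := by
  obtain ⟨y, hy, heq⟩ := exists_inner_eq_sfn hK hne (z + w)
  rw [← heq, inner_add_left]
  exact add_le_add (inner_le_sfn hK z hy) (inner_le_sfn hK w hy)

open scoped Pointwise in
theorem sfn_smul (K : Set (Eu n)) (z : Eu n) {t : ℝ} (ht : 0 ≤ t) :
    sfn K (t • z) = t * sfn K z := by
  have himage : (fun y => ⟪t • z, y⟫_ℝ) '' K = t • (fun y => ⟪z, y⟫_ℝ) '' K := by
    simp_rw [real_inner_smul_left, ← Set.image_smul, Set.image_image, smul_eq_mul]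
  rw [sfn, himage, Real.sSup_smul_of_nonneg ht, smul_eq_mul, sfn]

theorem tens_apply (x v : Eu n) : tens x v = ⟪x, v⟫_ℝ • x := by
  simp [tens]

end SupportFunction

namespace IsSmoothConvexBody

variable {n : ℕ} {K : Set (Eu n)}

theorem nonempty (hK : IsSmoothConvexBody K) : K.Nonempty :=
  hK.interior_nonempty.mono interior_subset

theorem contDiffAt (hK : IsSmoothConvexBody K) {z : Eu n} (hz : z ≠ 0) :
    ContDiffAt ℝ (⊤ : ℕ∞) (sfn K) z :=
  hK.smooth.contDiffAt (isOpen_compl_singleton.mem_nhds hz)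

theorem differentiableAt (hK : IsSmoothConvexBody K) {z : Eu n} (hz : z ≠ 0) :
    DifferentiableAt ℝ (sfn K) z :=
  (hK.contDiffAt hz).differentiableAt (by simp)

theorem gradient_eq (hK : IsSmoothConvexBody K) {z : Eu n} (hz : z ≠ 0) {y : Eu n}
    (hy : y ∈ K) (h : ⟪z, y⟫_ℝ = sfn K z) : gradient (sfn K) z = y :=
  gradient_eq_of_inner_le (hK.differentiableAt hz) (fun w => inner_le_sfn hK.compact w hy) h

theorem gradient_mem (hK : IsSmoothConvexBody K) {z : Eu n} (hz : z ≠ 0) :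
    gradient (sfn K) z ∈ K := by
  obtain ⟨y, hy, h⟩ := exists_inner_eq_sfn hK.compact hK.nonempty z
  rwa [hK.gradient_eq hz hy h]

theorem inner_gradient (hK : IsSmoothConvexBody K) {z : Eu n} (hz : z ≠ 0) :
    ⟪z, gradient (sfn K) z⟫_ℝ = sfn K z := by
  obtain ⟨y, hy, h⟩ := exists_inner_eq_sfn hK.compact hK.nonempty z
  rwa [hK.gradient_eq hz hy h]

theorem inner_gradient_le (hK : IsSmoothConvexBody K) (z : Eu n) {w : Eu n} (hw : w ≠ 0) :
    ⟪z, gradient (sfn K) w⟫_ℝ ≤ sfn K z :=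
  inner_le_sfn hK.compact z (hK.gradient_mem hw)

theorem gradient_smul (hK : IsSmoothConvexBody K) {z : Eu n} (hz : z ≠ 0) {t : ℝ} (ht : 0 < t) :
    gradient (sfn K) (t • z) = gradient (sfn K) z :=
  hK.gradient_eq (smul_ne_zero ht.ne' hz) (hK.gradient_mem hz) <| by
    rw [real_inner_smul_left, hK.inner_gradient hz, sfn_smul K z ht.le]

theorem contDiffAt_gradient (hK : IsSmoothConvexBody K) {z : Eu n} (hz : z ≠ 0) :
    ContDiffAt ℝ (⊤ : ℕ∞) (gradient (sfn K)) z :=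
  (InnerProductSpace.toDual ℝ (Eu n)).symm.toContinuousLinearEquiv.contDiff.contDiffAt.comp z
    ((hK.contDiffAt hz).fderiv_right (m := (⊤ : ℕ∞)) (by simp))

theorem hasFDerivAt_gradient (hK : IsSmoothConvexBody K) {z : Eu n} (hz : z ≠ 0) :
    HasFDerivAt (gradient (sfn K)) (hessA K z) z :=
  ((hK.contDiffAt_gradient hz).differentiableAt (by simp)).hasFDerivAt

theorem hasFDerivAt (hK : IsSmoothConvexBody K) {z : Eu n} (hz : z ≠ 0) :
    HasFDerivAt (sfn K) (innerSL ℝ (gradient (sfn K) z)) z :=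
  (hK.differentiableAt hz).hasGradientAt.hasFDerivAt

theorem continuousAt_hessA (hK : IsSmoothConvexBody K) {z : Eu n} (hz : z ≠ 0) :
    ContinuousAt (hessA K) z :=
  ((hK.contDiffAt_gradient hz).fderiv_right (m := (⊤ : ℕ∞)) (by simp)).continuousAt

theorem hessA_isSymmetric (hK : IsSmoothConvexBody K) {z : Eu n} (hz : z ≠ 0) :
    (hessA K z : Eu n →ₗ[ℝ] Eu n).IsSymmetric := fun v w => by
  have hsymm : IsSymmSndFDerivAt ℝ (sfn K) z := (hK.contDiffAt hz).isSymmSndFDerivAt <| by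
    simpa using WithTop.coe_le_coe.2 (le_top : (2 : ℕ∞) ≤ ⊤)
  have h := hsymm v w
  rwa [← inner_fderiv_gradient, ← inner_fderiv_gradient, real_inner_comm v] at h

theorem hessA_smul (hK : IsSmoothConvexBody K) {z : Eu n} (hz : z ≠ 0) {t : ℝ} (ht : 0 < t) :
    hessA K (t • z) = t⁻¹ • hessA K z := by
  have hcomp := (hK.hasFDerivAt_gradient (smul_ne_zero ht.ne' hz)).comp z
    ((hasFDerivAt_id z).const_smul t)
  have hconst : HasFDerivAt (gradient (sfn K) ∘ fun w : Eu n => t • w) (hessA K z) z := by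
    refine (hK.hasFDerivAt_gradient hz).congr_of_eventuallyEq ?_
    filter_upwards [isOpen_compl_singleton.mem_nhds hz] with w hw
    exact hK.gradient_smul hw ht
  rw [← hcomp.unique hconst]
  ext v
  simp [smul_smul, ht.ne']

theorem hessA_apply_self (hK : IsSmoothConvexBody K) {z : Eu n} (hz : z ≠ 0) :
    hessA K z z = 0 := by
  have hray : HasDerivAt (fun t : ℝ => t • z) z 1 := by
    simpa using (hasDerivAt_id (1 : ℝ)).smul_const z
  have hcomp := HasFDerivAt.comp_hasDerivAt (1 : ℝ)
    (hK.hasFDerivAt_gradient (z := (1 : ℝ) • z) (by simpa using hz)) hray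
  have hconst : HasDerivAt (gradient (sfn K) ∘ fun t : ℝ => t • z) 0 1 := by
    refine (hasDerivAt_const (1 : ℝ) (gradient (sfn K) z)).congr_of_eventuallyEq ?_
    filter_upwards [lt_mem_nhds (zero_lt_one (α := ℝ))] with t ht
    exact hK.gradient_smul hz ht
  simpa using hcomp.unique hconst

theorem inner_self_hessA (hK : IsSmoothConvexBody K) {z : Eu n} (hz : z ≠ 0) (v : Eu n) :
    ⟪z, hessA K z v⟫_ℝ = 0 := by
  have h := hK.hessA_isSymmetric hz z v
  simpa [hK.hessA_apply_self hz] using h.symm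

theorem continuous_sfn (hK : IsSmoothConvexBody K) : Continuous fun x : Sph n => sfn K x :=
  continuous_comp_coe_sphere fun _ hz => (hK.contDiffAt hz).continuousAt

theorem continuous_gradient (hK : IsSmoothConvexBody K) :
    Continuous fun x : Sph n => gradient (sfn K) (x : Eu n) :=
  continuous_comp_coe_sphere fun _ hz => (hK.contDiffAt_gradient hz).continuousAt

theorem continuous_hessA (hK : IsSmoothConvexBody K) :
    Continuous fun x : Sph n => hessA K (x : Eu n) :=
  continuous_comp_coe_sphere fun _ hz => hK.continuousAt_hessA hz

theorem continuous_rK (hK : IsSmoothConvexBody K) :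
    Continuous fun x : Sph n => rK K (x : Eu n) := by
  have htens : Continuous fun x : Sph n => tens (x : Eu n) := by
    unfold tens
    fun_prop
  exact ContinuousLinearMap.continuous_det.comp (hK.continuous_hessA.add htens)

theorem continuous_dens (hK : IsSmoothConvexBody K) :
    Continuous fun x : Sph n => dens K (x : Eu n) :=
  hK.continuous_sfn.mul hK.continuous_rK

theorem inner_hessA_self_pos (hK : IsSmoothConvexBody K) (x : Sph n) {v : Eu n}
    (hv : v ≠ ⟪(x : Eu n), v⟫_ℝ • (x : Eu n)) : 0 < ⟪hessA K (x : Eu n) v, v⟫_ℝ := by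
  have hx := ne_zero_of_mem_unit_sphere x
  have hpos := hK.posdef x _ (sub_ne_zero.2 hv)
  simpa [tens_apply, hK.hessA_apply_self hx, inner_sub_right, inner_smul_right,
    real_inner_comm (x : Eu n), hK.inner_self_hessA hx] using hpos

theorem inner_hessA_self_nonneg (hK : IsSmoothConvexBody K) (x : Sph n) (v : Eu n) :
    0 ≤ ⟪hessA K (x : Eu n) v, v⟫_ℝ := by
  by_cases hv : v = ⟪(x : Eu n), v⟫_ℝ • (x : Eu n)
  · rw [hv, map_smul, hK.hessA_apply_self (ne_zero_of_mem_unit_sphere x)]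
    simp
  · exact (hK.inner_hessA_self_pos x hv).le

theorem rK_pos (hK : IsSmoothConvexBody K) (x : Sph n) : 0 < rK K (x : Eu n) := by
  refine det_pos_of_isSymmetric (fun v w => ?_) (hK.posdef x)
  have h := hK.hessA_isSymmetric (ne_zero_of_mem_unit_sphere x) v w
  simpa [tens_apply, inner_add_left, inner_add_right, inner_smul_left, inner_smul_right,
    real_inner_comm (x : Eu n), mul_comm] using h

theorem dens_pos (hK : IsSmoothConvexBody K) (x : Sph n) : 0 < dens K (x : Eu n) :=
  mul_pos (hK.pos x) (hK.rK_pos x)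

theorem gradient_eq_of_mem_segment (hK : IsSmoothConvexBody K) {x x' : Sph n}
    (h : gradient (sfn K) (x' : Eu n) = gradient (sfn K) (x : Eu n)) {z : Eu n}
    (hz : z ∈ segment ℝ (x : Eu n) x') : gradient (sfn K) z = gradient (sfn K) (x : Eu n) := by
  have hx := ne_zero_of_mem_unit_sphere x
  have hx' := ne_zero_of_mem_unit_sphere x'
  obtain ⟨a, b, ha, hb, hab, rfl⟩ := hz
  set z := a • (x : Eu n) + b • (x' : Eu n)
  have hinner : ⟪z, gradient (sfn K) (x : Eu n)⟫_ℝ = a * sfn K x + b * sfn K x' := by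
    rw [inner_add_left, real_inner_smul_left, real_inner_smul_left, hK.inner_gradient hx, ← h,
      hK.inner_gradient hx']
  have hpos : 0 < a * sfn K x + b * sfn K x' := by
    rcases ha.eq_or_lt with rfl | ha
    · nlinarith [hK.pos x']
    · exact add_pos_of_pos_of_nonneg (mul_pos ha (hK.pos x)) (mul_nonneg hb (hK.pos x').le)
  have hz0 : z ≠ 0 := fun h0 => by simp [← hinner, h0] at hpos
  refine hK.gradient_eq hz0 (hK.gradient_mem hx)
    (le_antisymm (hK.inner_gradient_le z hx) ?_)
  rw [hinner, ← sfn_smul K _ ha, ← sfn_smul K _ hb]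
  exact sfn_add_le hK.compact hK.nonempty _ _

theorem hessA_apply_sub_eq_zero (hK : IsSmoothConvexBody K) {x x' : Sph n}
    (h : gradient (sfn K) (x' : Eu n) = gradient (sfn K) (x : Eu n)) :
    hessA K (x : Eu n) (x' - x) = 0 := by
  have hline : HasDerivAt (AffineMap.lineMap (x : Eu n) (x' : Eu n)) ((x' : Eu n) - x) (0 : ℝ) :=
    AffineMap.hasDerivAt_lineMap
  have hcomp := HasFDerivAt.comp_hasDerivAt (0 : ℝ) (by
    simpa using hK.hasFDerivAt_gradient (ne_zero_of_mem_unit_sphere x)) hline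
  have hconst : HasDerivWithinAt (gradient (sfn K) ∘ AffineMap.lineMap (x : Eu n) (x' : Eu n))
      0 (Set.Icc 0 1) (0 : ℝ) :=
    (hasDerivWithinAt_const (0 : ℝ) (Set.Icc 0 1) (gradient (sfn K) (x : Eu n))).congr
      (fun t ht => hK.gradient_eq_of_mem_segment h
        (segment_eq_image_lineMap ℝ (x : Eu n) x' ▸ Set.mem_image_of_mem _ ht)) (by simp)
  exact (uniqueDiffOn_Icc zero_lt_one 0 (by simp)).eq_deriv _ hcomp.hasDerivWithinAt hconst

theorem gradient_injective (hK : IsSmoothConvexBody K) :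
    Function.Injective fun x : Sph n => gradient (sfn K) (x : Eu n) := fun x' x h => by
  set t := ⟪(x : Eu n), (x' : Eu n)⟫_ℝ with ht
  have hx' : (x' : Eu n) = t • (x : Eu n) := by
    by_contra hne
    refine (hK.inner_hessA_self_pos x (v := x' - x) ?_).ne'
      (by rw [hK.hessA_apply_sub_eq_zero h, inner_zero_left])
    simpa [inner_sub_right, ← ht, sub_smul] using hne
  have htpos : 0 < t := by
    have hinner := hK.inner_gradient (ne_zero_of_mem_unit_sphere x')
    rw [show gradient (sfn K) (x' : Eu n) = gradient (sfn K) x from h, hx', real_inner_smul_left,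
      hK.inner_gradient (ne_zero_of_mem_unit_sphere x), ← hx'] at hinner
    exact pos_of_mul_pos_left (hinner ▸ hK.pos x') (hK.pos x).le
  have hnorm := congrArg norm hx'
  rw [norm_smul, norm_eq_of_mem_sphere, norm_eq_of_mem_sphere, mul_one,
    Real.norm_of_nonneg htpos.le] at hnorm
  exact Subtype.ext (by rw [hx', ← hnorm, one_smul])

theorem eq_and_eq_of_smul_gradient_eq (hK : IsSmoothConvexBody K) {x x' : Sph n} {r r' : ℝ}
    (hr : 0 < r) (hr' : 0 < r')
    (h : r • gradient (sfn K) (x : Eu n) = r' • gradient (sfn K) (x' : Eu n)) :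
    r = r' ∧ x = x' := by
  have key : ∀ {x x' : Sph n} {r r' : ℝ}, 0 < r' →
      r • gradient (sfn K) (x : Eu n) = r' • gradient (sfn K) (x' : Eu n) → r ≤ r' := by
    intro x x' r r' hr' h
    refine le_of_mul_le_mul_right ?_ (hK.pos x)
    calc r * sfn K x = ⟪(x : Eu n), r • gradient (sfn K) (x : Eu n)⟫_ℝ := by
          rw [real_inner_smul_right, hK.inner_gradient (ne_zero_of_mem_unit_sphere x)]
      _ = r' * ⟪(x : Eu n), gradient (sfn K) (x' : Eu n)⟫_ℝ := by rw [h, real_inner_smul_right]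
      _ ≤ r' * sfn K x :=
        mul_le_mul_of_nonneg_left (hK.inner_gradient_le _ (ne_zero_of_mem_unit_sphere x')) hr'.le
  obtain rfl : r = r' := le_antisymm (key hr' h) (key hr h.symm)
  exact ⟨rfl, hK.gradient_injective (smul_right_injective _ hr.ne' h)⟩

theorem exists_smul_gradient_eq (hK : IsSmoothConvexBody K) {y : Eu n} (hy : y ≠ 0) :
    ∃ (x : Sph n) (s : ℝ), 0 < s ∧ s • gradient (sfn K) (x : Eu n) = y := by
  -- `s` is the gauge of `K` at `y`, and `x` is a normal direction of `K` at `s⁻¹ • y`.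
  have hcont : Continuous fun x : Sph n => ⟪(x : Eu n), y⟫_ℝ / sfn K x :=
    Continuous.div (by fun_prop) hK.continuous_sfn fun x => (hK.pos x).ne'
  obtain ⟨x, -, hmax⟩ := isCompact_univ.exists_isMaxOn Set.univ_nonempty hcont.continuousOn
  set s := ⟪(x : Eu n), y⟫_ℝ / sfn K x with hs
  have hle : ∀ w : Sph n, ⟪(w : Eu n), y⟫_ℝ ≤ s * sfn K w := fun w =>
    (div_le_iff₀ (hK.pos w)).1 (hmax (Set.mem_univ w))
  have hs0 : 0 < s := by
    obtain ⟨w, hw⟩ := exists_norm_smul_mem_sphere_eq hy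
    refine pos_of_mul_pos_left (lt_of_lt_of_le ?_ (hle w)) (hK.pos w).le
    rw [← hw, real_inner_smul_right, real_inner_self_sphere, mul_one]
    exact norm_pos_iff.2 hy
  have hgrad : gradient (sfn K) (x : Eu n) = s⁻¹ • y := by
    refine gradient_eq_of_inner_le (hK.differentiableAt (ne_zero_of_mem_unit_sphere x))
      (fun w => ?_) ?_
    · rcases eq_or_ne w 0 with rfl | hw
      · simpa using (sfn_smul K (0 : Eu n) le_rfl).ge
      · obtain ⟨v, hv⟩ := exists_norm_smul_mem_sphere_eq hw
        rw [← hv, sfn_smul K _ (norm_nonneg w), real_inner_smul_left, real_inner_smul_right]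
        exact mul_le_mul_of_nonneg_left ((inv_mul_le_iff₀ hs0).2 (hle v)) (norm_nonneg w)
    · rw [real_inner_smul_right, inv_mul_eq_iff_eq_mul₀ hs0.ne', hs,
        div_mul_cancel₀ _ (hK.pos x).ne']
  exact ⟨x, s, hs0, by rw [hgrad, smul_inv_smul₀ hs0.ne']⟩

end IsSmoothConvexBody

section ClosedBall

variable {n : ℕ}

theorem sfn_closedBall (z : Eu n) : sfn (closedBall 0 1) z = ‖z‖ := by
  refine IsGreatest.csSup_eq ⟨?_, ?_⟩
  · refine ⟨‖z‖⁻¹ • z, by simpa [norm_smul] using inv_mul_le_one, ?_⟩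
    rcases eq_or_ne z 0 with rfl | hz
    · simp
    · simp [real_inner_smul_right, hz, sq]
  · rintro _ ⟨y, hy, rfl⟩
    exact (real_inner_le_norm z y).trans
      (mul_le_of_le_one_right (norm_nonneg z) (mem_closedBall_zero_iff.1 hy))

theorem gradient_sfn_closedBall {z : Eu n} (hz : z ≠ 0) :
    gradient (sfn (closedBall 0 1)) z = ‖z‖⁻¹ • z := by
  rw [funext sfn_closedBall]
  exact ((InnerProductSpace.toDual ℝ (Eu n)).symm_apply_eq.2 (hasFDerivAt_norm hz).fderiv)

theorem gradient_sfn_closedBall_sphere (x : Sph n) :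
    gradient (sfn (closedBall 0 1)) (x : Eu n) = x := by
  simp [gradient_sfn_closedBall (ne_zero_of_mem_unit_sphere x)]

theorem hessA_closedBall_add_tens (x : Sph n) :
    hessA (closedBall 0 1) (x : Eu n) + tens (x : Eu n) = .id ℝ (Eu n) := by
  have hx := ne_zero_of_mem_unit_sphere x
  have hderiv : HasFDerivAt (gradient (sfn (closedBall (0 : Eu n) 1)))
      (ContinuousLinearMap.id ℝ (Eu n) - tens (x : Eu n)) (x : Eu n) := by
    have hsmul := ((hasDerivAt_inv (norm_ne_zero_iff.2 hx)).comp_hasFDerivAt (x : Eu n)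
      (hasFDerivAt_norm hx)).smul (hasFDerivAt_id (x : Eu n))
    refine (hsmul.congr_of_eventuallyEq ?_).congr_fderiv ?_
    · filter_upwards [isOpen_compl_singleton.mem_nhds hx] with z hz
      exact gradient_sfn_closedBall hz
    · ext v
      simp [tens_apply, sub_eq_add_neg]
  rw [hessA, hderiv.fderiv, sub_add_cancel]

theorem isSmoothConvexBody_closedBall : IsSmoothConvexBody (closedBall (0 : Eu n) 1) where
  compact := isCompact_closedBall 0 1
  convex := convex_closedBall 0 1
  interior_nonempty := ⟨0, by simp [interior_closedBall]⟩
  pos x := by simp [sfn_closedBall]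
  smooth := by
    rw [funext sfn_closedBall]
    exact fun z hz => (contDiffAt_norm ℝ hz).contDiffWithinAt
  posdef x v hv := by
    rw [hessA_closedBall_add_tens]
    exact real_inner_self_pos.2 hv

theorem rK_closedBall (x : Sph n) : rK (closedBall 0 1) (x : Eu n) = 1 := by
  simp [rK, hessA_closedBall_add_tens]

theorem dens_closedBall (x : Sph n) : dens (closedBall 0 1) (x : Eu n) = 1 := by
  simp [dens, rK_closedBall, sfn_closedBall]

end ClosedBall

section RadialRegion

variable {n : ℕ} {K : Set (Eu n)} {ρ : Sph n → ℝ}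

namespace IsSmoothConvexBody

theorem norm_smul_gradient_smul (hK : IsSmoothConvexBody K) (x : Sph n) {r : ℝ} (hr : 0 < r) :
    ‖r • (x : Eu n)‖ • gradient (sfn K) (r • (x : Eu n)) = r • gradient (sfn K) (x : Eu n) := by
  rw [hK.gradient_smul (ne_zero_of_mem_unit_sphere x) hr, norm_smul, norm_eq_of_mem_sphere,
    mul_one, Real.norm_of_nonneg hr.le]

theorem hasFDerivAt_norm_smul_gradient (hK : IsSmoothConvexBody K) (x : Sph n) {r : ℝ}
    (hr : 0 < r) : HasFDerivAt (fun z : Eu n => ‖z‖ • gradient (sfn K) z)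
      (hessA K (x : Eu n) + (innerSL ℝ (x : Eu n)).smulRight (gradient (sfn K) (x : Eu n)))
      (r • (x : Eu n)) := by
  have hx := ne_zero_of_mem_unit_sphere x
  have hz := smul_ne_zero hr.ne' hx
  refine ((hasFDerivAt_norm hz).smul (hK.hasFDerivAt_gradient hz)).congr_fderiv ?_
  rw [hK.hessA_smul hx hr, hK.gradient_smul hx hr, norm_smul, norm_eq_of_mem_sphere, mul_one,
    Real.norm_of_nonneg hr.le, smul_inv_smul₀ hr.ne', inv_smul_smul₀ hr.ne']

theorem differentiableAt_norm_smul_gradient (hK : IsSmoothConvexBody K) {z : Eu n} (hz : z ≠ 0) :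
    DifferentiableAt ℝ (fun z : Eu n => ‖z‖ • gradient (sfn K) z) z :=
  (hasFDerivAt_norm hz).differentiableAt.smul (hK.hasFDerivAt_gradient hz).differentiableAt

theorem det_hessA_add_smulRight_gradient (hK : IsSmoothConvexBody K) (x : Sph n) :
    (hessA K (x : Eu n) + (innerSL ℝ (x : Eu n)).smulRight (gradient (sfn K) (x : Eu n))).det =
      dens K (x : Eu n) := by
  have hx := ne_zero_of_mem_unit_sphere x
  rw [dens, ← hK.inner_gradient hx]
  exact det_add_smulRight (norm_eq_of_mem_sphere x) (hK.inner_self_hessA hx) _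

theorem injOn_norm_smul_gradient (hK : IsSmoothConvexBody K) :
    Set.InjOn (fun z : Eu n => ‖z‖ • gradient (sfn K) z) {0}ᶜ := by
  intro z hz z' hz' h
  obtain ⟨x, hx⟩ := exists_norm_smul_mem_sphere_eq hz
  obtain ⟨x', hx'⟩ := exists_norm_smul_mem_sphere_eq hz'
  have hnorm := norm_pos_iff.2 hz
  have hnorm' := norm_pos_iff.2 hz'
  rw [← hx, ← hx'] at h
  simp only [hK.norm_smul_gradient_smul _ hnorm, hK.norm_smul_gradient_smul _ hnorm'] at h
  obtain ⟨hzz', rfl⟩ := hK.eq_and_eq_of_smul_gradient_eq hnorm hnorm' h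
  rw [← hx, ← hx', hzz']

end IsSmoothConvexBody

/-- The region swept out by the half-open segments from the origin to `ρ x • ∇h_K(x)`, both
endpoints excluded; for `ρ = 1` it is `interior K \ {0}`. -/
def radialRegion (K : Set (Eu n)) (ρ : Sph n → ℝ) : Set (Eu n) :=
  {z | ∃ (x : Sph n) (r : ℝ), 0 < r ∧ r < ρ x ∧ r • gradient (sfn K) (x : Eu n) = z}

theorem radialRegion_eq_image (hK : IsSmoothConvexBody K) (ρ : Sph n → ℝ) :
    radialRegion K ρ = (fun z : Eu n => ‖z‖ • gradient (sfn K) z) ''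
      ((fun p : Sph n × Set.Ioi (0 : ℝ) => (p.2 : ℝ) • (p.1 : Eu n)) '' {p | p.2 < ρ p.1}) := by
  rw [Set.image_image]
  ext z
  constructor
  · rintro ⟨x, r, hr, hrρ, rfl⟩
    exact ⟨(x, ⟨r, hr⟩), hrρ, hK.norm_smul_gradient_smul x hr⟩
  · rintro ⟨⟨x, r, hr⟩, hrρ, rfl⟩
    exact ⟨x, r, hr, hrρ, (hK.norm_smul_gradient_smul x hr).symm⟩

theorem lintegral_prod_volumeIoiPow_lt {α : Type*} [MeasurableSpace α] (μ : Measure α) (n : ℕ)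
    {g : α → ℝ≥0∞} (hg : Measurable g) {ρ : α → ℝ} (hρ : Measurable ρ) (hρ0 : ∀ x, 0 < ρ x) :
    ∫⁻ p in {p : α × Set.Ioi (0 : ℝ) | p.2 < ρ p.1}, g p.1 ∂μ.prod (.volumeIoiPow n) =
      ∫⁻ x, g x * ENNReal.ofReal (ρ x ^ (n + 1) / (n + 1)) ∂μ := by
  have hS : MeasurableSet {p : α × Set.Ioi (0 : ℝ) | p.2 < ρ p.1} :=
    measurableSet_lt (by fun_prop) (by fun_prop)
  rw [← lintegral_indicator hS, lintegral_prod _ (by fun_prop (disch := exact hS))]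
  refine lintegral_congr fun x => ?_
  calc ∫⁻ r, {p : α × Set.Ioi (0 : ℝ) | p.2 < ρ p.1}.indicator (fun p => g p.1) (x, r)
        ∂Measure.volumeIoiPow n
      = ∫⁻ r, (Set.Iio ⟨ρ x, hρ0 x⟩).indicator (fun _ => g x) r ∂Measure.volumeIoiPow n := rfl
    _ = g x * ENNReal.ofReal (ρ x ^ (n + 1) / (n + 1)) := by
      rw [lintegral_indicator_const measurableSet_Iio, Measure.volumeIoiPow_apply_Iio]

theorem measurableSet_polar_lt (hρ : Continuous ρ) : MeasurableSet
    ((fun p : Sph n × Set.Ioi (0 : ℝ) => (p.2 : ℝ) • (p.1 : Eu n)) '' {p | p.2 < ρ p.1}) :=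
  measurableEmbedding_polar.measurableSet_image.2
    (isOpen_lt (by fun_prop) (by fun_prop)).measurableSet

theorem polar_lt_subset (ρ : Sph n → ℝ) :
    (fun p : Sph n × Set.Ioi (0 : ℝ) => (p.2 : ℝ) • (p.1 : Eu n)) '' {p | p.2 < ρ p.1} ⊆ {0}ᶜ := by
  rintro _ ⟨⟨x, r, hr⟩, -, rfl⟩
  exact smul_ne_zero (ne_of_gt hr) (ne_zero_of_mem_unit_sphere x)

theorem measurableSet_radialRegion (hK : IsSmoothConvexBody K) (hρ : Continuous ρ) :
    MeasurableSet (radialRegion K ρ) := by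
  rw [radialRegion_eq_image hK]
  exact (measurableSet_polar_lt hρ).image_of_continuousOn_injOn
    (fun z hz => (hK.differentiableAt_norm_smul_gradient
      (polar_lt_subset ρ hz)).continuousAt.continuousWithinAt)
    (hK.injOn_norm_smul_gradient.mono (polar_lt_subset ρ))

theorem volume_radialRegion (hK : IsSmoothConvexBody K) (hρ : Continuous ρ) (hρ0 : ∀ x, 0 < ρ x) :
    volume (radialRegion K ρ) =
      ENNReal.ofReal ((∫ x, ρ x ^ (n + 1) * dens K x ∂sphMeas n) / (n + 1)) := by
  have hpolar := measurePreserving_polar (volume : Measure (Eu n))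
  rw [finrank_euclideanSpace_fin, Nat.add_sub_cancel] at hpolar
  set Φ := fun z : Eu n => ‖z‖ • gradient (sfn K) z
  set S := {p : Sph n × Set.Ioi (0 : ℝ) | p.2 < ρ p.1}
  calc volume (radialRegion K ρ)
      = ∫⁻ p in S, ENNReal.ofReal |(fderiv ℝ Φ ((p.2 : ℝ) • (p.1 : Eu n))).det|
          ∂(sphMeas n).prod (.volumeIoiPow n) := by
        rw [radialRegion_eq_image hK, ← lintegral_abs_det_fderiv_eq_addHaar_image volume
          (measurableSet_polar_lt hρ)
          (fun z hz => (hK.differentiableAt_norm_smul_gradient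
            (polar_lt_subset ρ hz)).hasFDerivAt.hasFDerivWithinAt)
          (hK.injOn_norm_smul_gradient.mono (polar_lt_subset ρ))]
        exact (hpolar.setLIntegral_comp_emb measurableEmbedding_polar _ S).symm
    _ = ∫⁻ p in S, ENNReal.ofReal (dens K p.1) ∂(sphMeas n).prod (.volumeIoiPow n) := by
        refine lintegral_congr fun p => ?_
        rw [(hK.hasFDerivAt_norm_smul_gradient p.1 p.2.2).fderiv,
          hK.det_hessA_add_smulRight_gradient, abs_of_pos (hK.dens_pos p.1)]
    _ = ∫⁻ x, ENNReal.ofReal (ρ x ^ (n + 1) * dens K x / (n + 1)) ∂sphMeas n := by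
        rw [lintegral_prod_volumeIoiPow_lt (sphMeas n) n (g := fun x => ENNReal.ofReal (dens K x))
          hK.continuous_dens.measurable.ennreal_ofReal hρ.measurable hρ0]
        refine lintegral_congr fun x => ?_
        rw [← ENNReal.ofReal_mul (hK.dens_pos x).le, mul_comm, div_mul_eq_mul_div]
    _ = ENNReal.ofReal ((∫ x, ρ x ^ (n + 1) * dens K x ∂sphMeas n) / (n + 1)) := by
        have hcont : Continuous fun x : Sph n => ρ x ^ (n + 1) * dens K x / (n + 1) :=
          ((hρ.pow _).mul hK.continuous_dens).div_const _
        rw [← integral_div, ofReal_integral_eq_lintegral_ofReal (integrable_sphMeas hcont)]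
        exact ae_of_all _ fun x => div_nonneg
          (mul_nonneg (pow_nonneg (hρ0 x).le _) (hK.dens_pos x).le) (by positivity)

end RadialRegion

section BrunnMinkowski

open scoped Pointwise

variable {n : ℕ} {K : Set (Eu n)}

namespace IsSmoothConvexBody

theorem exists_inner_lt_of_mem_radialRegion (hK : IsSmoothConvexBody K) {ρ : Sph n → ℝ}
    (hρ : ∀ x, 0 < ρ x) {z : Eu n} (hz : z ∈ radialRegion K ρ) (x : Sph n) :
    ∃ y : Sph n, ⟪(x : Eu n), z⟫_ℝ < ⟪(x : Eu n), gradient (sfn K) (y : Eu n)⟫_ℝ * ρ y := by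
  obtain ⟨y, r, hr, hrρ, rfl⟩ := hz
  rw [real_inner_smul_right]
  rcases le_or_gt ⟪(x : Eu n), gradient (sfn K) (y : Eu n)⟫_ℝ 0 with h | h
  · refine ⟨x, (mul_nonpos_of_nonneg_of_nonpos hr.le h).trans_lt ?_⟩
    rw [hK.inner_gradient (ne_zero_of_mem_unit_sphere x)]
    exact mul_pos (hK.pos x) (hρ x)
  · exact ⟨y, by rw [mul_comm]; exact mul_lt_mul_of_pos_left hrρ h⟩

theorem half_smul_radialRegion_add_subset (hK : IsSmoothConvexBody K) {ρ₁ ρ₂ ρ : Sph n → ℝ}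
    (hρ₁ : ∀ x, 0 < ρ₁ x) (hρ₂ : ∀ x, 0 < ρ₂ x)
    (h : ∀ x y₁ y₂ : Sph n, (⟪(x : Eu n), gradient (sfn K) (y₁ : Eu n)⟫_ℝ * ρ₁ y₁ +
      ⟪(x : Eu n), gradient (sfn K) (y₂ : Eu n)⟫_ℝ * ρ₂ y₂) / 2 ≤ sfn K x * ρ x) :
    (2⁻¹ : ℝ) • radialRegion K ρ₁ + (2⁻¹ : ℝ) • radialRegion K ρ₂ ⊆
      insert 0 (radialRegion K ρ) := by
  rintro _ ⟨_, ⟨z₁, hz₁, rfl⟩, _, ⟨z₂, hz₂, rfl⟩, rfl⟩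
  refine or_iff_not_imp_left.2 fun hz => ?_
  obtain ⟨x, s, hs, hsz⟩ := hK.exists_smul_gradient_eq hz
  obtain ⟨y₁, hy₁⟩ := hK.exists_inner_lt_of_mem_radialRegion hρ₁ hz₁ x
  obtain ⟨y₂, hy₂⟩ := hK.exists_inner_lt_of_mem_radialRegion hρ₂ hz₂ x
  have hsx : sfn K x * s < sfn K x * ρ x := calc
    sfn K x * s = (⟪(x : Eu n), z₁⟫_ℝ + ⟪(x : Eu n), z₂⟫_ℝ) / 2 := by
      rw [mul_comm, ← hK.inner_gradient (ne_zero_of_mem_unit_sphere x), ← real_inner_smul_right,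
        hsz]
      simp only [inner_add_right, real_inner_smul_right]
      ring
    _ < _ := by linarith
    _ ≤ sfn K x * ρ x := h x y₁ y₂
  exact ⟨x, s, hs, lt_of_mul_lt_mul_left hsx (hK.pos x).le, hsz⟩

theorem integral_mul_integral_le_sq (hK : IsSmoothConvexBody K) {ρ₁ ρ₂ ρ : Sph n → ℝ}
    (hρ₁ : Continuous ρ₁) (hρ₂ : Continuous ρ₂) (hρ : Continuous ρ) (hρ₁0 : ∀ x, 0 < ρ₁ x)
    (hρ₂0 : ∀ x, 0 < ρ₂ x) (hρ0 : ∀ x, 0 < ρ x)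
    (h : ∀ x y₁ y₂ : Sph n, (⟪(x : Eu n), gradient (sfn K) (y₁ : Eu n)⟫_ℝ * ρ₁ y₁ +
      ⟪(x : Eu n), gradient (sfn K) (y₂ : Eu n)⟫_ℝ * ρ₂ y₂) / 2 ≤ sfn K x * ρ x) :
    (∫ x, ρ₁ x ^ (n + 1) * dens K x ∂sphMeas n) * (∫ x, ρ₂ x ^ (n + 1) * dens K x ∂sphMeas n) ≤
      (∫ x, ρ x ^ (n + 1) * dens K x ∂sphMeas n) ^ 2 := by
  have hI {σ : Sph n → ℝ} (hσ : ∀ x, 0 < σ x) :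
      0 ≤ (∫ x, σ x ^ (n + 1) * dens K x ∂sphMeas n) / (n + 1) :=
    div_nonneg (integral_nonneg fun x =>
      mul_nonneg (pow_nonneg (hσ x).le _) (hK.dens_pos x).le) (by positivity)
  have hBM := (prekopaLeindler_volume (Eu n)).mul_measure_le (s := 2⁻¹) (t := 2⁻¹)
    (by norm_num) (by norm_num) (by norm_num) (measurableSet_radialRegion hK hρ₁)
    (measurableSet_radialRegion hK hρ₂) ((measurableSet_radialRegion hK hρ).insert 0)
    (hK.half_smul_radialRegion_add_subset hρ₁0 hρ₂0 h)
  rw [measure_congr (insert_ae_eq_self _ _), volume_radialRegion hK hρ₁ hρ₁0,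
    volume_radialRegion hK hρ₂ hρ₂0, volume_radialRegion hK hρ hρ0,
    ← ENNReal.mul_rpow_of_nonneg _ _ (by norm_num), ENNReal.rpow_inv_le_iff (by norm_num),
    ← ENNReal.ofReal_mul (hI hρ₁0), ENNReal.rpow_ofNat, ← ENNReal.ofReal_pow (hI hρ0),
    ENNReal.ofReal_le_ofReal_iff (sq_nonneg _), div_mul_div_comm, div_pow, ← sq] at hBM
  exact (div_le_div_iff_of_pos_right (by positivity)).1 hBM

end IsSmoothConvexBody

end BrunnMinkowski

section Poincare

theorem exists_one_add_pow_eq (N : ℕ) : ∃ r : ℝ → ℝ, Continuous r ∧ r 0 = N * (N - 1) / 2 ∧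
    ∀ t, (1 + t) ^ N = 1 + N * t + t ^ 2 * r t := by
  induction N with
  | zero => exact ⟨0, continuous_zero, by simp, by simp⟩
  | succ N ih =>
    obtain ⟨r, hr, hr0, h⟩ := ih
    refine ⟨fun t => N + (1 + t) * r t, by fun_prop, ?_, fun t => ?_⟩
    · simp only [hr0]
      push_cast
      ring
    · rw [pow_succ, h]
      push_cast
      ring

theorem exists_integral_one_add_mul_pow_eq {α : Type*} [TopologicalSpace α] [CompactSpace α]
    [MeasurableSpace α] [OpensMeasurableSpace α] (μ : Measure α) [IsFiniteMeasure μ]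
    {u g : α → ℝ} (hu : Continuous u) (hg : Continuous g) (N : ℕ) :
    ∃ q : ℝ → ℝ, Continuous q ∧ q 0 = N * (N - 1) / 2 * ∫ x, u x ^ 2 * g x ∂μ ∧
      ∀ ε, ∫ x, (1 + ε * u x) ^ N * g x ∂μ =
        ∫ x, g x ∂μ + ε * (N * ∫ x, u x * g x ∂μ) + ε ^ 2 * q ε := by
  have hint {f : α → ℝ} (hf : Continuous f) : Integrable f μ :=
    hf.integrable_of_hasCompactSupport (.of_compactSpace f)
  obtain ⟨r, hr, hr0, h⟩ := exists_one_add_pow_eq N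
  refine ⟨fun ε => ∫ x, r (ε * u x) * (u x ^ 2 * g x) ∂μ, ?_, ?_, fun ε => ?_⟩
  · simpa using continuous_parametric_integral_of_continuous (μ := μ)
      (f := fun (ε : ℝ) x => r (ε * u x) * (u x ^ 2 * g x)) (by fun_prop) isCompact_univ
  · simp only [zero_mul, hr0, integral_const_mul]
  · rw [← integral_const_mul, ← integral_const_mul, ← integral_const_mul,
      ← integral_add (hint hg) (hint (by fun_prop)),
      ← integral_add (hint (by fun_prop)) (hint (by fun_prop))]
    refine integral_congr_ae (ae_of_all _ fun x => ?_)
    simp only [h]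
    ring

theorem eventually_forall_one_add_mul_pos {α : Type*} [TopologicalSpace α] [CompactSpace α]
    {u : α → ℝ} (hu : Continuous u) : ∀ᶠ ε in 𝓝 (0 : ℝ), ∀ x, 0 < 1 + ε * u x := by
  have h := isCompact_univ.eventually_forall_of_forall_eventually (x₀ := (0 : ℝ))
    (P := fun ε x => 0 < 1 + ε * u x) fun x _ =>
      ((continuous_const.add (continuous_fst.mul (hu.comp continuous_snd))).tendsto
        ((0 : ℝ), x)).eventually (lt_mem_nhds (by simp))
  simpa using h

namespace IsSmoothConvexBody

variable {n : ℕ} {K : Set (Eu n)} {f φ : Sph n → ℝ}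

theorem integral_dens_pos (hK : IsSmoothConvexBody K) : 0 < ∫ x, dens K x ∂sphMeas n :=
  (hK.continuous_dens.integral_pos_of_hasCompactSupport_nonneg_nonzero (x := Classical.arbitrary _)
    (.of_compactSpace _) (fun x => (hK.dens_pos x).le) (hK.dens_pos _).ne')

theorem integral_mul_integral_neg_le_sq (hK : IsSmoothConvexBody K) (hf : Continuous f)
    (hφ : Continuous φ)
    (H : ∀ᶠ ε in 𝓝 (0 : ℝ), ∀ x y : Sph n,
      ⟪(x : Eu n), gradient (sfn K) (y : Eu n)⟫_ℝ * (1 + ε * f y) ≤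
        sfn K x * (1 + ε * f x + ε ^ 2 * φ x)) :
    ∀ᶠ ε in 𝓝 (0 : ℝ),
      (∫ x, (1 + ε * f x) ^ (n + 1) * dens K x ∂sphMeas n) *
        (∫ x, (1 + -ε * f x) ^ (n + 1) * dens K x ∂sphMeas n) ≤
      (∫ x, (1 + ε ^ 2 * φ x) ^ (n + 1) * dens K x ∂sphMeas n) ^ 2 := by
  have hneg : Filter.Tendsto (fun ε : ℝ => -ε) (𝓝 0) (𝓝 0) := by
    simpa using (continuous_neg (G := ℝ)).tendsto 0
  have hsq : Filter.Tendsto (fun ε : ℝ => ε ^ 2) (𝓝 0) (𝓝 0) := by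
    simpa using (continuous_pow (M := ℝ) 2).tendsto 0
  have hf0 := eventually_forall_one_add_mul_pos hf
  filter_upwards [H, hneg.eventually H, hf0, hneg.eventually hf0,
    hsq.eventually (eventually_forall_one_add_mul_pos hφ)] with ε h₁ h₂ hρ₁ hρ₂ hρ
  refine hK.integral_mul_integral_le_sq (by fun_prop) (by fun_prop) (by fun_prop) hρ₁ hρ₂ hρ
    fun x y₁ y₂ => ?_
  linarith [h₁ x y₁, h₂ x y₂]

theorem natCast_mul_integral_sq_mul_dens_le_of_eventually (hK : IsSmoothConvexBody K)
    (hf : Continuous f) (hφ : Continuous φ) (hf0 : ∫ x, f x * dens K x ∂sphMeas n = 0)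
    (H : ∀ᶠ ε in 𝓝 (0 : ℝ), ∀ x y : Sph n,
      ⟪(x : Eu n), gradient (sfn K) (y : Eu n)⟫_ℝ * (1 + ε * f y) ≤
        sfn K x * (1 + ε * f x + ε ^ 2 * φ x)) :
    n * ∫ x, f x ^ 2 * dens K x ∂sphMeas n ≤ 2 * ∫ x, φ x * dens K x ∂sphMeas n := by
  obtain ⟨p, hp, hp0, hfp⟩ :=
    exists_integral_one_add_mul_pow_eq (sphMeas n) hf hK.continuous_dens (n + 1)
  obtain ⟨q, hq, -, hφq⟩ :=
    exists_integral_one_add_mul_pow_eq (sphMeas n) hφ hK.continuous_dens (n + 1)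
  set V := ∫ x, dens K x ∂sphMeas n
  set D := ∫ x, φ x * dens K x ∂sphMeas n
  have hV : 0 < V := hK.integral_dens_pos
  -- The second-order Taylor coefficients at `ε = 0` inherit the Brunn-Minkowski inequality.
  have hlim : V * (p 0 + p (-0)) + 0 ^ 2 * (p 0 * p (-0)) ≤
      2 * V * ((n + 1) * D + 0 ^ 2 * q (0 ^ 2)) +
        0 ^ 2 * ((n + 1) * D + 0 ^ 2 * q (0 ^ 2)) ^ 2 := by
    refine le_of_tendsto_of_tendsto (b := 𝓝[≠] (0 : ℝ))
      (f := fun ε => V * (p ε + p (-ε)) + ε ^ 2 * (p ε * p (-ε)))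
      (g := fun ε => 2 * V * ((n + 1) * D + ε ^ 2 * q (ε ^ 2)) +
        ε ^ 2 * ((n + 1) * D + ε ^ 2 * q (ε ^ 2)) ^ 2)
      (Continuous.continuousWithinAt (by fun_prop)) (Continuous.continuousWithinAt (by fun_prop)) ?_
    filter_upwards [nhdsWithin_le_nhds (hK.integral_mul_integral_neg_le_sq hf hφ H),
      self_mem_nhdsWithin] with ε hε hε0
    rw [hfp, hfp, hφq, hf0] at hε
    refine le_of_mul_le_mul_left ?_ (pow_pos (abs_pos.2 hε0) 2)
    rw [sq_abs]
    push_cast at hε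
    linarith
  rw [neg_zero, hp0] at hlim
  push_cast at hlim
  refine le_of_mul_le_mul_left ?_ (mul_pos hV (by positivity : (0 : ℝ) < n + 1))
  linarith

theorem natCast_mul_integral_sq_mul_dens_le (hK : IsSmoothConvexBody K) (hf : Continuous f)
    (hφ : Continuous φ) (hf0 : ∫ x, f x * dens K x ∂sphMeas n = 0)
    (H : ∀ δ > 0, ∀ᶠ ε in 𝓝 (0 : ℝ), ∀ x y : Sph n,
      ⟪(x : Eu n), gradient (sfn K) (y : Eu n)⟫_ℝ * (1 + ε * f y) ≤
        sfn K x * (1 + ε * f x) + ε ^ 2 * (φ x + δ)) :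
    n * ∫ x, f x ^ 2 * dens K x ∂sphMeas n ≤ 2 * ∫ x, φ x * rK K x ∂sphMeas n := by
  have hrK := hK.continuous_rK
  have hsfn := hK.continuous_sfn
  set V := ∫ x, rK K x ∂sphMeas n
  have hV : 0 ≤ V := integral_nonneg fun x => (hK.rK_pos x).le
  refine le_of_forall_pos_le_add fun η hη => ?_
  set δ := η / (2 * V + 1)
  have hδ : 0 < δ := by positivity
  have hδV : 2 * (δ * V) ≤ η := calc
    2 * (δ * V) ≤ δ * (2 * V + 1) := by linarith
    _ = η := div_mul_cancel₀ _ (by positivity)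
  have hcont : Continuous fun x : Sph n => (φ x + δ) / sfn K x :=
    Continuous.div (by fun_prop) hsfn fun x => (hK.pos x).ne'
  have hle := hK.natCast_mul_integral_sq_mul_dens_le_of_eventually hf hcont hf0 <| by
    filter_upwards [H δ hδ] with ε hε x y
    refine (hε x y).trans_eq ?_
    field_simp [(hK.pos x).ne']
  have hint : ∫ x : Sph n, (φ x + δ) / sfn K x * dens K x ∂sphMeas n =
      ∫ x, φ x * rK K x ∂sphMeas n + δ * V := by
    rw [← integral_const_mul,
      ← integral_add (integrable_sphMeas (by fun_prop)) (integrable_sphMeas (by fun_prop))]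
    refine integral_congr_ae (ae_of_all _ fun x => ?_)
    simp only [dens]
    field_simp [(hK.pos x).ne']
  linarith

end IsSmoothConvexBody

end Poincare

section SecondOrder

theorem le_add_add_of_hasDerivAt_of_le {g g' g'' : ℝ → ℝ} {M : ℝ}
    (hg : ∀ t ∈ Set.Icc (0 : ℝ) 1, HasDerivAt g (g' t) t)
    (hg' : ∀ t ∈ Set.Icc (0 : ℝ) 1, HasDerivAt g' (g'' t) t)
    (hM : ∀ t ∈ Set.Icc (0 : ℝ) 1, g'' t ≤ M) : g 1 ≤ g 0 + g' 0 + M / 2 := by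
  have hanti {u u' : ℝ → ℝ} (hu : ∀ t ∈ Set.Icc (0 : ℝ) 1, HasDerivAt u (u' t) t)
      (hu' : ∀ t ∈ Set.Icc (0 : ℝ) 1, u' t ≤ 0) : AntitoneOn u (Set.Icc 0 1) := by
    refine antitoneOn_of_hasDerivWithinAt_nonpos (convex_Icc 0 1)
      (fun t ht => (hu t ht).continuousAt.continuousWithinAt)
      (fun t ht => (hu t (interior_subset ht)).hasDerivWithinAt)
      (fun t ht => hu' t (interior_subset ht))
  have hle {t : ℝ} (ht : t ∈ Set.Icc (0 : ℝ) 1) : g' t ≤ g' 0 + M * t := by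
    have := hanti (u := fun t => g' t - M * t)
      (fun t ht => (hg' t ht).sub ((hasDerivAt_id t).const_mul M))
      (fun t ht => by linarith [hM t ht]) (Set.left_mem_Icc.2 zero_le_one) ht ht.1
    simp only at this
    linarith
  have := hanti (u := fun t => g t - (g' 0 * t + M / 2 * t ^ 2))
    (fun t ht => (hg t ht).sub
      (((hasDerivAt_id t).const_mul (g' 0)).add ((hasDerivAt_pow 2 t).const_mul (M / 2))))
    (fun t ht => by push_cast; linarith [hle ht]) (Set.left_mem_Icc.2 zero_le_one)
    (Set.right_mem_Icc.2 zero_le_one) zero_le_one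
  simp only at this
  linarith

theorem le_add_inner_add_of_hasFDerivAt_of_le {E : Type*} [NormedAddCommGroup E]
    [InnerProductSpace ℝ E] {f : E → ℝ} {X : E → E} {A : E → E →L[ℝ] E} {z v : E} {M : ℝ}
    (hf : ∀ t ∈ Set.Icc (0 : ℝ) 1, HasFDerivAt f (innerSL ℝ (X (z + t • v))) (z + t • v))
    (hX : ∀ t ∈ Set.Icc (0 : ℝ) 1, HasFDerivAt X (A (z + t • v)) (z + t • v))
    (hM : ∀ t ∈ Set.Icc (0 : ℝ) 1, ⟪A (z + t • v) v, v⟫_ℝ ≤ M) :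
    f (z + v) ≤ f z + ⟪X z, v⟫_ℝ + M / 2 := by
  have hline (t : ℝ) : HasDerivAt (fun t : ℝ => z + t • v) v t := by
    simpa using ((hasDerivAt_id t).smul_const v).const_add z
  have hinner (t : ℝ) (ht : t ∈ Set.Icc (0 : ℝ) 1) :
      HasDerivAt (fun t => ⟪X (z + t • v), v⟫_ℝ) ⟪A (z + t • v) v, v⟫_ℝ t := by
    simpa using ((hX t ht).comp_hasDerivAt t (hline t)).inner ℝ (hasDerivAt_const t v)
  simpa using le_add_add_of_hasDerivAt_of_le
    (fun t ht => (hf t ht).comp_hasDerivAt t (hline t)) hinner hM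

theorem eventually_forall_div_le_add {α : Type*} [TopologicalSpace α] [CompactSpace α] {φ : α → ℝ}
    (hφ : Continuous φ) {δ : ℝ} (hδ : 0 < δ) : ∀ᶠ κ in 𝓝 (1 : ℝ), ∀ x, φ x / κ ≤ φ x + δ := by
  have h := isCompact_univ.eventually_forall_of_forall_eventually (x₀ := (1 : ℝ))
    (P := fun κ x => φ x / κ - φ x < δ) fun x _ => by
      have hcont : ContinuousAt (fun p : ℝ × α => φ p.2 / p.1 - φ p.2) (1, x) := by
        fun_prop (disch := norm_num)
      exact hcont.eventually (gt_mem_nhds (by simpa using hδ))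
  filter_upwards [h] with κ hκ x
  linarith [hκ x trivial]

theorem tendsto_one_sub_abs_mul (C : ℝ) :
    Filter.Tendsto (fun ε : ℝ => 1 - |ε| * C) (𝓝 0) (𝓝 1) := by
  simpa using (show Continuous fun ε : ℝ => 1 - |ε| * C by fun_prop).tendsto 0

end SecondOrder

section HessianPoincare

namespace IsSmoothConvexBody

variable {n : ℕ} {K : Set (Eu n)}

theorem sfn_add_smul_le (hK : IsSmoothConvexBody K) {z v : Eu n} {τ M : ℝ}
    (hne : ∀ t ∈ Set.Icc (0 : ℝ) 1, z + t • τ • v ≠ 0)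
    (hM : ∀ t ∈ Set.Icc (0 : ℝ) 1, ⟪hessA K (z + t • τ • v) v, v⟫_ℝ ≤ M) :
    sfn K (z + τ • v) ≤ sfn K z + τ * ⟪gradient (sfn K) z, v⟫_ℝ + τ ^ 2 * (M / 2) := by
  have h := le_add_inner_add_of_hasFDerivAt_of_le (M := τ ^ 2 * M)
    (fun t ht => hK.hasFDerivAt (hne t ht)) (fun t ht => hK.hasFDerivAt_gradient (hne t ht))
    fun t ht => ?_
  · rwa [real_inner_smul_right, mul_div_assoc] at h
  · rw [map_smul, real_inner_smul_left, real_inner_smul_right, ← mul_assoc, ← sq]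
    exact mul_le_mul_of_nonneg_left (hM t ht) (sq_nonneg τ)

theorem eventually_sfn_add_smul_le (hK : IsSmoothConvexBody K) {v : Sph n → Eu n}
    (hv : Continuous v) {δ : ℝ} (hδ : 0 < δ) :
    ∀ᶠ τ in 𝓝 (0 : ℝ), ∀ x : Sph n, sfn K (x + τ • v x) ≤
      sfn K x + τ * ⟪gradient (sfn K) (x : Eu n), v x⟫_ℝ +
        τ ^ 2 * (⟪hessA K (x : Eu n) (v x), v x⟫_ℝ / 2 + δ) := by
  have hunif := (isCompact_Icc (a := (0 : ℝ)) (b := 1)).prod (isCompact_univ (X := Sph n))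
    |>.eventually_forall_of_forall_eventually (x₀ := (0 : ℝ))
      (P := fun τ p => (p.2 : Eu n) + p.1 • τ • v p.2 ≠ 0 ∧
        ⟪hessA K (p.2 + p.1 • τ • v p.2) (v p.2), v p.2⟫_ℝ -
          ⟪hessA K (p.2 : Eu n) (v p.2), v p.2⟫_ℝ < 2 * δ) ?_
  · filter_upwards [hunif] with τ hτ x
    refine (hK.sfn_add_smul_le (z := x) (v := v x)
      (M := ⟪hessA K (x : Eu n) (v x), v x⟫_ℝ + 2 * δ) (fun t ht => (hτ (t, x) ⟨ht, trivial⟩).1)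
      fun t ht => (sub_lt_iff_lt_add'.1 (hτ (t, x) ⟨ht, trivial⟩).2).le).trans_eq ?_
    ring
  · rintro ⟨t, x⟩ -
    have hx : (x : Eu n) + t • (0 : ℝ) • v x = x := by simp
    have hpt : ContinuousAt (fun p : ℝ × ℝ × Sph n => (p.2.2 : Eu n) + p.2.1 • p.1 • v p.2.2)
        (0, t, x) := by fun_prop
    have hA : ContinuousAt (hessA K) ((x : Eu n) + t • (0 : ℝ) • v x) := by
      rw [hx]
      exact hK.continuousAt_hessA (ne_zero_of_mem_unit_sphere x)
    have hvx : ContinuousAt (fun p : ℝ × ℝ × Sph n => v p.2.2) (0, t, x) := by fun_prop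
    have hAx : ContinuousAt (fun p : ℝ × ℝ × Sph n => hessA K (p.2.2 : Eu n)) (0, t, x) :=
      (hK.continuous_hessA.comp (continuous_snd.comp continuous_snd)).continuousAt
    have hquad := (((hA.comp' (x := ((0 : ℝ), t, x)) hpt).clm_apply hvx).inner (𝕜 := ℝ) hvx).sub
      ((hAx.clm_apply hvx).inner (𝕜 := ℝ) hvx)
    refine (hpt.eventually_ne ?_).and (hquad.eventually (gt_mem_nhds ?_))
    · simpa [hx] using ne_zero_of_mem_unit_sphere x
    · simpa [hx] using hδ

theorem inner_mul_one_add_le (hK : IsSmoothConvexBody K) {x y : Sph n} {e : Eu n}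
    {ε κ a C r : ℝ} (hκ : 0 < κ) (hκε : κ ≤ 1 - |ε| * C)
    (hC : |⟪gradient (sfn K) (y : Eu n), e⟫_ℝ - a| ≤ C)
    (hr : sfn K (x + (ε / κ) • sfn K x • e) ≤
      sfn K x + ε / κ * ⟪gradient (sfn K) (x : Eu n), sfn K x • e⟫_ℝ + (ε / κ) ^ 2 * r) :
    ⟪(x : Eu n), gradient (sfn K) (y : Eu n)⟫_ℝ *
        (1 + ε * (⟪gradient (sfn K) (y : Eu n), e⟫_ℝ - a)) ≤
      sfn K x * (1 + ε * (⟪gradient (sfn K) (x : Eu n), e⟫_ℝ - a)) + ε ^ 2 * (r / κ) := by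
  have hy := ne_zero_of_mem_unit_sphere y
  set s := ⟪(x : Eu n), gradient (sfn K) (y : Eu n)⟫_ℝ
  set t := ⟪gradient (sfn K) (y : Eu n), e⟫_ℝ
  have hs : s ≤ sfn K x := hK.inner_gradient_le x hy
  -- Compare `∇h(y)` with the support value of `K` in the tilted direction `x + (ε h(x) / κ) e`.
  have htilt : s + ε / κ * (sfn K x * t) ≤
      sfn K x + ε / κ * (sfn K x * ⟪gradient (sfn K) (x : Eu n), e⟫_ℝ) + (ε / κ) ^ 2 * r := by
    have := (hK.inner_gradient_le (x + (ε / κ) • sfn K x • e) hy).trans hr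
    rwa [inner_add_left, real_inner_smul_left, real_inner_smul_left, real_inner_smul_right,
      real_inner_comm _ e] at this
  have hslope : 0 ≤ 1 + ε * (t - a) - κ := by
    have hε := neg_abs_le (ε * (t - a))
    rw [abs_mul] at hε
    linarith [mul_le_mul_of_nonneg_left hC (abs_nonneg ε)]
  have hmul := mul_le_mul_of_nonneg_left htilt hκ.le
  have hdiv : κ * (ε / κ) = ε := mul_div_cancel₀ _ hκ.ne'
  calc s * (1 + ε * (t - a))
      = κ * s + s * (1 + ε * (t - a) - κ) := by ring
    _ ≤ κ * s + sfn K x * (1 + ε * (t - a) - κ) := by gcongr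
    _ = κ * (s + ε / κ * (sfn K x * t)) + sfn K x * (1 - ε * a - κ) := by
      linear_combination (-(sfn K x * t)) * hdiv
    _ ≤ κ * (sfn K x + ε / κ * (sfn K x * ⟪gradient (sfn K) (x : Eu n), e⟫_ℝ) +
          (ε / κ) ^ 2 * r) + sfn K x * (1 - ε * a - κ) := by gcongr
    _ = _ := by
      field_simp
      ring

theorem integral_inner_gradient_sub_cK_mul_dens (hK : IsSmoothConvexBody K) (e : Eu n) :
    ∫ x : Sph n, (⟪gradient (sfn K) (x : Eu n), e⟫_ℝ - ⟪cK K, e⟫_ℝ) * dens K x ∂sphMeas n = 0 := by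
  have hdens := hK.continuous_dens
  have hX := hK.continuous_gradient
  have hmoment : ∫ x : Sph n, ⟪gradient (sfn K) (x : Eu n), e⟫_ℝ * dens K x ∂sphMeas n =
      ⟪e, ∫ x : Sph n, dens K x • gradient (sfn K) (x : Eu n) ∂sphMeas n⟫_ℝ := by
    rw [← integral_inner (f := fun x : Sph n => dens K x • gradient (sfn K) (x : Eu n))
      (integrable_sphMeas (by fun_prop))]
    refine integral_congr_ae (ae_of_all _ fun x => ?_)
    simp only [real_inner_smul_right, real_inner_comm e, mul_comm]
  simp only [sub_mul]
  rw [integral_sub (integrable_sphMeas (by fun_prop)) (integrable_sphMeas (by fun_prop)), hmoment,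
    integral_const_mul, cK, real_inner_smul_left, real_inner_comm e, mul_right_comm,
    inv_mul_cancel₀ hK.integral_dens_pos.ne', one_mul, sub_self]

theorem natCast_mul_integral_inner_gradient_sub_cK_sq_le (hK : IsSmoothConvexBody K) (e : Eu n) :
    n * ∫ x : Sph n, ⟪gradient (sfn K) (x : Eu n) - cK K, e⟫_ℝ ^ 2 * dens K x ∂sphMeas n ≤
      ∫ x : Sph n, sfn K x * ⟪hessA K (x : Eu n) e, e⟫_ℝ * dens K x ∂sphMeas n := by
  have hX := hK.continuous_gradient
  have hA := hK.continuous_hessA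
  have hh := hK.continuous_sfn
  simp only [inner_sub_left]
  have hf : Continuous fun x : Sph n => ⟪gradient (sfn K) (x : Eu n), e⟫_ℝ - ⟪cK K, e⟫_ℝ := by
    fun_prop
  have hv : Continuous fun x : Sph n => sfn K x • e := by fun_prop
  have hφ : Continuous fun x : Sph n => ⟪hessA K (x : Eu n) (sfn K x • e), sfn K x • e⟫_ℝ / 2 := by
    fun_prop
  obtain ⟨C, hC⟩ := (isCompact_range hf).exists_bound_of_continuousOn continuousOn_id
  refine (hK.natCast_mul_integral_sq_mul_dens_le hf hφ
    (hK.integral_inner_gradient_sub_cK_mul_dens e) fun δ hδ => ?_).trans_eq ?_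
  · have hκ := tendsto_one_sub_abs_mul C
    have hτ : Filter.Tendsto (fun ε : ℝ => ε / (1 - |ε| * C)) (𝓝 0) (𝓝 0) := by
      have hcont : ContinuousAt (fun ε : ℝ => ε / (1 - |ε| * C)) 0 := by
        fun_prop (disch := simp)
      simpa using hcont.tendsto
    filter_upwards [hτ.eventually (hK.eventually_sfn_add_smul_le hv (half_pos hδ)),
      hκ.eventually (lt_mem_nhds one_pos), hκ.eventually (eventually_forall_div_le_add
        (hφ.add (continuous_const (y := δ / 2))) (half_pos hδ))] with ε hε hpos hdiv x y
    refine (hK.inner_mul_one_add_le hpos le_rfl (hC _ (Set.mem_range_self y)) (hε x)).trans ?_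
    gcongr
    exact (hdiv x).trans_eq (by simp only [Pi.add_apply]; ring)
  · rw [← integral_const_mul]
    refine integral_congr_ae (ae_of_all _ fun x => ?_)
    simp only [map_smul, real_inner_smul_left, real_inner_smul_right, dens]
    ring

theorem natCast_mul_integral_norm_gradient_sub_cK_sq_le (hK : IsSmoothConvexBody K) :
    n * ∫ x : Sph n, ‖gradient (sfn K) (x : Eu n) - cK K‖ ^ 2 * dens K x ∂sphMeas n ≤
      ∫ x : Sph n, sfn K x * LinearMap.trace ℝ (Eu n) (hessA K (x : Eu n)) * dens K x
        ∂sphMeas n := by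
  have hX := hK.continuous_gradient
  have hA := hK.continuous_hessA
  have hh := hK.continuous_sfn
  have hdens := hK.continuous_dens
  let b := EuclideanSpace.basisFun (Fin (n + 1)) ℝ
  have hnorm (v : Eu n) : ‖v‖ ^ 2 = ∑ i, ⟪v, b i⟫_ℝ ^ 2 := by
    rw [← b.sum_sq_norm_inner_left]
    simp only [Real.norm_eq_abs, sq_abs]
  have htrace (x : Sph n) : LinearMap.trace ℝ (Eu n) (hessA K (x : Eu n)) =
      ∑ i, ⟪hessA K (x : Eu n) (b i), b i⟫_ℝ := by
    simp only [LinearMap.trace_eq_sum_inner _ b, real_inner_comm (b _)]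
    rfl
  simp only [hnorm, htrace, Finset.mul_sum, Finset.sum_mul]
  rw [integral_finsetSum _ fun i _ => integrable_sphMeas (by fun_prop),
    integral_finsetSum _ fun i _ => integrable_sphMeas (by fun_prop), Finset.mul_sum]
  exact Finset.sum_le_sum fun i _ => hK.natCast_mul_integral_inner_gradient_sub_cK_sq_le (b i)

end IsSmoothConvexBody

end HessianPoincare

section SpherePoincare

variable {n : ℕ}

theorem inner_coe_sphere_sub_self (x y : Sph n) :
    ⟪(x : Eu n), (y : Eu n) - x⟫_ℝ = -(‖(y : Eu n) - x‖ ^ 2 / 2) := by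
  have := norm_sub_sq_real (y : Eu n) x
  rw [norm_eq_of_mem_sphere, norm_eq_of_mem_sphere, real_inner_comm] at this
  rw [inner_sub_right, real_inner_self_sphere, this]
  ring

theorem inner_mul_one_add_le_of_abs_sub_sub_inner_le {x y : Sph n} {T : Eu n}
    {a b ε F L : ℝ} (hb : |b| ≤ F) (hL : |b - a - ⟪T, (y : Eu n) - x⟫_ℝ| ≤ L * ‖(y : Eu n) - x‖ ^ 2)
    (hκ : 0 < 1 - |ε| * (F + 2 * L)) :
    ⟪(x : Eu n), (y : Eu n)⟫_ℝ * (1 + ε * b) ≤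
      1 + ε * a + ε ^ 2 * (‖T‖ ^ 2 / 2 / (1 - |ε| * (F + 2 * L))) := by
  have hxy := inner_coe_sphere_sub_self x y
  rw [inner_sub_right, real_inner_self_sphere, sub_eq_iff_eq_add] at hxy
  set d := ‖(y : Eu n) - x‖
  set κ := 1 - |ε| * (F + 2 * L) with hκ_def
  have hincr : ε * (b - a) ≤ |ε| * (‖T‖ * d + L * d ^ 2) := by
    have hdiff : |b - a| ≤ ‖T‖ * d + L * d ^ 2 :=
      calc |b - a| = |⟪T, (y : Eu n) - x⟫_ℝ + (b - a - ⟪T, (y : Eu n) - x⟫_ℝ)| := by ring_nf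
        _ ≤ _ := (abs_add_le _ _).trans (add_le_add (abs_real_inner_le_norm T _) hL)
    exact (le_abs_self _).trans ((abs_mul _ _).trans_le (by gcongr))
  have hdecr : -(ε * b) ≤ |ε| * F :=
    (neg_le_abs _).trans ((abs_mul _ _).trans_le (by gcongr))
  have hamgm : |ε| * ‖T‖ * d ≤ κ * d ^ 2 / 2 + ε ^ 2 * (‖T‖ ^ 2 / 2 / κ) := by
    have hsq : κ * d ^ 2 / 2 + ε ^ 2 * (‖T‖ ^ 2 / 2 / κ) - |ε| * ‖T‖ * d =
        (κ * d - |ε| * ‖T‖) ^ 2 / (2 * κ) := by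
      rw [← sq_abs ε]
      field_simp
      ring
    rw [← sub_nonneg, hsq]
    positivity
  calc ⟪(x : Eu n), (y : Eu n)⟫_ℝ * (1 + ε * b)
      = 1 + ε * a + ε * (b - a) + d ^ 2 / 2 * (-(ε * b)) - d ^ 2 / 2 := by rw [hxy]; ring
    _ ≤ 1 + ε * a + |ε| * (‖T‖ * d + L * d ^ 2) + d ^ 2 / 2 * (|ε| * F) - d ^ 2 / 2 := by gcongr
    _ = 1 + ε * a + |ε| * ‖T‖ * d - κ * d ^ 2 / 2 := by rw [hκ_def]; ring
    _ ≤ _ := by linarith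

theorem natCast_mul_integral_sq_le_of_abs_sub_sub_inner_le {f : Sph n → ℝ} {T : Sph n → Eu n}
    {L : ℝ} (hf : Continuous f) (hT : Continuous T)
    (hL : ∀ x y : Sph n, |f y - f x - ⟪T x, (y : Eu n) - x⟫_ℝ| ≤ L * ‖(y : Eu n) - x‖ ^ 2)
    (hf0 : ∫ x, f x ∂sphMeas n = 0) :
    n * ∫ x, f x ^ 2 ∂sphMeas n ≤ ∫ x, ‖T x‖ ^ 2 ∂sphMeas n := by
  obtain ⟨F, hF⟩ := (isCompact_range hf).exists_bound_of_continuousOn continuousOn_id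
  have hφ : Continuous fun x => ‖T x‖ ^ 2 / 2 := by fun_prop
  have h := (isSmoothConvexBody_closedBall (n := n)).natCast_mul_integral_sq_mul_dens_le hf hφ
    (by simpa only [dens_closedBall, mul_one] using hf0) fun δ hδ => ?_
  · simp only [dens_closedBall, rK_closedBall, mul_one, integral_div] at h
    linarith
  · have hκ := tendsto_one_sub_abs_mul (F + 2 * L)
    filter_upwards [hκ.eventually (lt_mem_nhds one_pos),
      hκ.eventually (eventually_forall_div_le_add hφ hδ)] with ε hpos hdiv x y
    rw [gradient_sfn_closedBall_sphere, sfn_closedBall, norm_eq_of_mem_sphere, one_mul]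
    refine (inner_mul_one_add_le_of_abs_sub_sub_inner_le (hF _ (Set.mem_range_self y))
      (hL x y) hpos).trans ?_
    gcongr
    exact hdiv x

end SpherePoincare

section CenteredSupport

namespace IsSmoothConvexBody

variable {n : ℕ} {K : Set (Eu n)}

theorem continuous_tsfn (hK : IsSmoothConvexBody K) : Continuous fun x : Sph n => tsfn K x := by
  have := hK.continuous_sfn
  unfold tsfn
  fun_prop

theorem exists_lipschitzOnWith_gradient (hK : IsSmoothConvexBody K) :
    ∃ L, LipschitzOnWith L (gradient (sfn K)) (sphere 0 1) := by
  refine LocallyLipschitzOn.exists_lipschitzOnWith_of_compact (isCompact_sphere 0 1) fun x hx => ?_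
  obtain ⟨L, t, ht, hL⟩ := ((hK.contDiffAt_gradient
    (ne_zero_of_mem_unit_sphere ⟨x, hx⟩)).of_le (by simp)).exists_lipschitzOnWith
  exact ⟨L, t, mem_nhdsWithin_of_mem_nhds ht, hL⟩

theorem inner_gradient_sub_cK (hK : IsSmoothConvexBody K) (x : Sph n) :
    ⟪gradient (sfn K) (x : Eu n) - cK K, x⟫_ℝ = tsfn K x := by
  rw [inner_sub_left, real_inner_comm, hK.inner_gradient (ne_zero_of_mem_unit_sphere x),
    real_inner_comm, tsfn]

theorem sfn_sub_inner_gradient_le (hK : IsSmoothConvexBody K) {z w : Eu n} (hz : z ≠ 0)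
    (hw : w ≠ 0) : sfn K w - ⟪w, gradient (sfn K) z⟫_ℝ ≤
      ‖w - z‖ * ‖gradient (sfn K) w - gradient (sfn K) z‖ := by
  have h := real_inner_le_norm (w - z) (gradient (sfn K) w - gradient (sfn K) z)
  rw [inner_sub_left, inner_sub_right, inner_sub_right, hK.inner_gradient hw,
    hK.inner_gradient hz] at h
  linarith [hK.inner_gradient_le z hw]

theorem exists_abs_tsfn_sub_sub_inner_le (hK : IsSmoothConvexBody K) :
    ∃ C, ∀ x y : Sph n, |tsfn K y - tsfn K x -
      ⟪gradient (sfn K) (x : Eu n) - cK K - tsfn K x • (x : Eu n), (y : Eu n) - x⟫_ℝ| ≤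
        C * ‖(y : Eu n) - x‖ ^ 2 := by
  obtain ⟨L, hL⟩ := hK.exists_lipschitzOnWith_gradient
  obtain ⟨W, hW⟩ :=
    (isCompact_range hK.continuous_tsfn).exists_bound_of_continuousOn continuousOn_id
  refine ⟨L + W / 2, fun x y => ?_⟩
  have hx := ne_zero_of_mem_unit_sphere x
  have hexpand : tsfn K y - tsfn K x -
      ⟪gradient (sfn K) (x : Eu n) - cK K - tsfn K x • (x : Eu n), (y : Eu n) - x⟫_ℝ =
      (sfn K y - ⟪(y : Eu n), gradient (sfn K) (x : Eu n)⟫_ℝ) -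
        tsfn K x * (‖(y : Eu n) - x‖ ^ 2 / 2) := by
    rw [inner_sub_left, real_inner_smul_left, inner_coe_sphere_sub_self, inner_sub_right,
      hK.inner_gradient_sub_cK, inner_sub_left, real_inner_comm, real_inner_comm _ (cK K), tsfn]
    ring
  have hnonneg := sub_nonneg.2 (hK.inner_gradient_le (y : Eu n) hx)
  have hle : sfn K y - ⟪(y : Eu n), gradient (sfn K) (x : Eu n)⟫_ℝ ≤
      L * ‖(y : Eu n) - x‖ ^ 2 := by
    have hlip := hL.norm_sub_le y.2 x.2
    calc _ ≤ _ := hK.sfn_sub_inner_gradient_le hx (ne_zero_of_mem_unit_sphere y)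
      _ ≤ ‖(y : Eu n) - x‖ * (L * ‖(y : Eu n) - x‖) := by gcongr
      _ = L * ‖(y : Eu n) - x‖ ^ 2 := by ring
  have hWx : |tsfn K x| ≤ W := hW _ (Set.mem_range_self x)
  rw [hexpand]
  refine (abs_sub _ _).trans ?_
  rw [abs_of_nonneg hnonneg, abs_mul, abs_of_nonneg (by positivity :
    (0 : ℝ) ≤ ‖(y : Eu n) - x‖ ^ 2 / 2)]
  linarith [mul_le_mul_of_nonneg_right hWx (by positivity :
    (0 : ℝ) ≤ ‖(y : Eu n) - x‖ ^ 2 / 2)]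

theorem natCast_mul_integral_tsfn_sub_sq_le (hK : IsSmoothConvexBody K) {a : ℝ}
    (ha : ∫ x : Sph n, (tsfn K x - a) ∂sphMeas n = 0) :
    n * ∫ x : Sph n, (tsfn K x - a) ^ 2 ∂sphMeas n ≤
      ∫ x : Sph n, (‖gradient (sfn K) (x : Eu n) - cK K‖ ^ 2 - tsfn K x ^ 2) ∂sphMeas n := by
  have hX := hK.continuous_gradient
  have ht := hK.continuous_tsfn
  obtain ⟨C, hC⟩ := hK.exists_abs_tsfn_sub_sub_inner_le
  refine (natCast_mul_integral_sq_le_of_abs_sub_sub_inner_le (L := C)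
    (T := fun x => gradient (sfn K) (x : Eu n) - cK K - tsfn K x • (x : Eu n))
    (by fun_prop) (by fun_prop) (fun x y => ?_) ha).trans_eq ?_
  · simpa only [sub_sub_sub_cancel_right] using hC x y
  · refine integral_congr_ae (ae_of_all _ fun x => ?_)
    simp only [norm_sub_sq_real _ (tsfn K (x : Eu n) • (x : Eu n)), real_inner_smul_right,
      hK.inner_gradient_sub_cK, norm_smul, norm_eq_of_mem_sphere, Real.norm_eq_abs, mul_one, sq_abs]
    ring

end IsSmoothConvexBody

end CenteredSupport

section CompactlySupported

variable {E : Type*} [NormedAddCommGroup E] [InnerProductSpace ℝ E] [FiniteDimensional ℝ E]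

theorem continuous_trace_clm : Continuous fun T : E →L[ℝ] E => LinearMap.trace ℝ E T :=
  ((LinearMap.trace ℝ E).comp (ContinuousLinearMap.coeLM ℝ)).continuous_of_finiteDimensional

variable [MeasurableSpace E] [BorelSpace E] (μ : Measure E) [μ.IsAddHaarMeasure]

theorem integral_trace_fderiv_eq_zero {U : E → E} (hU : ContDiff ℝ 1 U)
    (hc : HasCompactSupport U) : ∫ z, LinearMap.trace ℝ E (fderiv ℝ U z) ∂μ = 0 := by
  have hint (e : E) : Integrable (fun z => ⟪e, fderiv ℝ U z e⟫_ℝ) μ := by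
    refine Continuous.integrable_of_hasCompactSupport (by fun_prop) ?_
    exact (hc.fderiv ℝ).comp_left (g := fun T : E →L[ℝ] E => ⟪e, T e⟫_ℝ) (by simp)
  have hcomp (e : E) : ∫ z, ⟪e, fderiv ℝ U z e⟫_ℝ ∂μ = 0 := by
    have hderiv (z : E) : fderiv ℝ (fun z => ⟪e, U z⟫_ℝ) z e = ⟪e, fderiv ℝ U z e⟫_ℝ := by
      rw [fderiv_inner_apply ℝ (differentiableAt_const e) (hU.differentiable one_ne_zero z)]
      simp
    have hint_inner : Integrable (fun z => ⟪e, U z⟫_ℝ) μ :=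
      Continuous.integrable_of_hasCompactSupport (by have := hU.continuous; fun_prop)
        (hc.comp_left (g := fun w => ⟪e, w⟫_ℝ) (by simp))
    simpa [hderiv] using integral_mul_fderiv_eq_neg_fderiv_mul_of_integrable (μ := μ)
      (f := fun z => ⟪e, U z⟫_ℝ) (g := fun _ => (1 : ℝ)) (v := e) (by simpa [hderiv] using hint e)
      (by simp) (by simpa using hint_inner)
      (fun z _ => (differentiableAt_const e).inner ℝ (hU.differentiable one_ne_zero z)) (by simp)
  simp only [LinearMap.trace_eq_sum_inner _ (stdOrthonormalBasis ℝ E)]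
  exact (integral_finsetSum _ fun i _ => hint _).trans (Finset.sum_eq_zero fun i _ => hcomp _)

end CompactlySupported

section RadialCutoff

theorem exists_radial_cutoff (n : ℕ) : ∃ ψ : ℝ → ℝ, ContDiff ℝ 1 ψ ∧ HasCompactSupport ψ ∧
    0 ∉ tsupport ψ ∧ 0 < ∫ r in Set.Ioi (0 : ℝ), r ^ n * ψ r := by
  let B : ContDiffBump (1 : ℝ) := ⟨1 / 4, 1 / 2, by norm_num, by norm_num⟩
  have hsupp : tsupport B ⊆ Set.Ioi 0 := by
    rw [B.tsupport_eq, Real.closedBall_eq_Icc]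
    exact fun r hr => lt_of_lt_of_le (by norm_num [B]) hr.1
  have hB0 (r : ℝ) (hr : r ∉ Set.Ioi 0) : B r = 0 :=
    image_eq_zero_of_notMem_tsupport (hr <| hsupp ·)
  refine ⟨B, B.contDiff, B.hasCompactSupport, fun h => lt_irrefl (0 : ℝ) (hsupp h), ?_⟩
  rw [setIntegral_eq_integral_of_forall_compl_eq_zero fun r hr => by rw [hB0 r hr, mul_zero]]
  have hcont : Continuous fun r => r ^ n * B r := by
    have := B.continuous
    fun_prop
  refine hcont.integral_pos_of_hasCompactSupport_nonneg_nonzero B.hasCompactSupport.mul_left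
    (fun r => ?_) (x := 1) ?_
  · by_cases hr : r ∈ Set.Ioi 0
    · exact mul_nonneg (pow_nonneg (le_of_lt hr) n) B.nonneg
    · simp [hB0 r hr]
  · simp [B.one_of_mem_closedBall (mem_closedBall_self B.rIn_pos.le)]

theorem integral_Ioi_pow_mul_mul_deriv {ψ : ℝ → ℝ} (hψ : ContDiff ℝ 1 ψ) (hc : HasCompactSupport ψ)
    (n : ℕ) : ∫ r in Set.Ioi (0 : ℝ), r ^ n * (r * deriv ψ r) =
      -((n + 1) * ∫ r in Set.Ioi (0 : ℝ), r ^ n * ψ r) := by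
  have hcont := hψ.continuous
  have hderiv (r : ℝ) : deriv (fun r => r ^ (n + 1) * ψ r) r =
      (n + 1) * (r ^ n * ψ r) + r ^ n * (r * deriv ψ r) := by
    have h := (hasDerivAt_pow (n + 1) r).mul (hψ.differentiable one_ne_zero r).hasDerivAt
    refine h.deriv.trans ?_
    push_cast
    ring
  have h := HasCompactSupport.integral_Ioi_deriv_eq (f := fun r => r ^ (n + 1) * ψ r)
    ((contDiff_id.pow _).mul hψ) hc.mul_left 0
  simp only [hderiv] at h
  rw [integral_add, integral_const_mul] at h
  · simp only [ne_eq, Nat.succ_ne_zero, not_false_eq_true, zero_pow, zero_mul, neg_zero] at h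
    linarith
  · exact (Continuous.integrable_of_hasCompactSupport (by fun_prop)
      hc.mul_left.mul_left).integrableOn
  · exact (Continuous.integrable_of_hasCompactSupport (by fun_prop)
      hc.deriv.mul_left.mul_left).integrableOn

variable {E F : Type*} [NormedAddCommGroup E] [NormedAddCommGroup F] [NormedSpace ℝ F]
  {ψ : ℝ → ℝ} {G : E → F}

theorem ne_zero_of_mem_tsupport_norm_smul (h0 : 0 ∉ tsupport ψ) {z : E}
    (hz : z ∈ tsupport fun z => ψ ‖z‖ • G z) : z ≠ 0 := by
  rintro rfl
  have hψ := notMem_tsupport_iff_eventuallyEq.1 h0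
  refine notMem_tsupport_iff_eventuallyEq.2 ?_ hz
  filter_upwards [(continuous_norm.tendsto' (0 : E) 0 norm_zero).eventually hψ] with w hw
  rw [hw, Pi.zero_apply, zero_smul, Pi.zero_apply]

theorem continuous_norm_smul (hψ : Continuous ψ) (h0 : 0 ∉ tsupport ψ)
    (hG : ContinuousOn G {0}ᶜ) : Continuous fun z => ψ ‖z‖ • G z :=
  continuous_of_tsupport fun _ hz => (hψ.comp continuous_norm).continuousAt.smul
    (hG.continuousAt (isOpen_compl_singleton.mem_nhds (ne_zero_of_mem_tsupport_norm_smul h0 hz)))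

theorem hasCompactSupport_norm_smul [ProperSpace E] (hc : HasCompactSupport ψ) :
    HasCompactSupport fun z => ψ ‖z‖ • G z := by
  have h : HasCompactSupport fun z : E => ψ ‖z‖ := by
    obtain ⟨R, hR⟩ := hc.isCompact.isBounded.subset_closedBall 0
    refine HasCompactSupport.intro (isCompact_closedBall (0 : E) R) fun z hz => ?_
    refine image_eq_zero_of_notMem_tsupport fun h => hz ?_
    simpa using hR h
  exact h.smul_right

theorem integrable_norm_smul [ProperSpace E] [MeasurableSpace E] [BorelSpace E] {μ : Measure E}
    [IsFiniteMeasureOnCompacts μ] (hψ : Continuous ψ) (hc : HasCompactSupport ψ)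
    (h0 : 0 ∉ tsupport ψ) (hG : ContinuousOn G {0}ᶜ) : Integrable (fun z => ψ ‖z‖ • G z) μ :=
  (continuous_norm_smul hψ h0 hG).integrable_of_hasCompactSupport (hasCompactSupport_norm_smul hc)

end RadialCutoff

section SphereDivergence

open Module (finrank)

variable {E : Type*} [NormedAddCommGroup E] [InnerProductSpace ℝ E]

theorem fderiv_smul_of_homogeneous {W : E → E} (hW : ∀ z ≠ 0, ∀ r > (0 : ℝ), W (r • z) = r • W z)
    {z : E} (hz : z ≠ 0) {r : ℝ} (hr : 0 < r) : fderiv ℝ W (r • z) = fderiv ℝ W z := by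
  have hcongr : (fun w => W (r • w)) =ᶠ[𝓝 z] r • W := by
    filter_upwards [isOpen_compl_singleton.mem_nhds hz] with w hw using hW w hw r hr
  have h := hcongr.fderiv_eq (𝕜 := ℝ)
  rw [fderiv_comp_smul, fderiv_const_smul_field] at h
  exact smul_right_injective _ hr.ne' h

theorem contDiff_norm_smul {ψ : ℝ → ℝ} (hψ : ContDiff ℝ 1 ψ) (h0 : 0 ∉ tsupport ψ) {W : E → E}
    (hW : ContDiffOn ℝ 1 W {0}ᶜ) : ContDiff ℝ 1 fun z => ψ ‖z‖ • W z :=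
  contDiff_iff_contDiffAt.2 fun z => by
    by_cases hz : z ∈ tsupport fun z => ψ ‖z‖ • W z
    · have hz0 := ne_zero_of_mem_tsupport_norm_smul h0 hz
      exact (hψ.contDiffAt.comp z (contDiffAt_norm ℝ hz0)).smul
        (hW.contDiffAt (isOpen_compl_singleton.mem_nhds hz0))
    · exact contDiffAt_const.congr_of_eventuallyEq (notMem_tsupport_iff_eventuallyEq.1 hz)

variable [FiniteDimensional ℝ E]

theorem trace_fderiv_norm_smul {ψ : ℝ → ℝ} (hψ : ContDiff ℝ 1 ψ) {W : E → E} {z : E} (hz : z ≠ 0)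
    (hW : DifferentiableAt ℝ W z) :
    LinearMap.trace ℝ E (fderiv ℝ (fun z => ψ ‖z‖ • W z) z) =
      ψ ‖z‖ • LinearMap.trace ℝ E (fderiv ℝ W z) + deriv ψ ‖z‖ • ⟪‖z‖⁻¹ • z, W z⟫_ℝ := by
  have h : HasFDerivAt (fun z => ψ ‖z‖ • W z) _ z :=
    ((hψ.differentiable one_ne_zero ‖z‖).hasDerivAt.comp_hasFDerivAt z
      (hasFDerivAt_norm hz)).fun_smul hW.hasFDerivAt
  rw [h.fderiv]
  simp [ContinuousLinearMap.coe_smulRight, LinearMap.trace_smulRight, real_inner_smul_left]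

variable [MeasurableSpace E] [BorelSpace E] [Nontrivial E]
  (μ : Measure E) [μ.IsAddHaarMeasure]

theorem integral_toSphere_eq_zero_of_odd {g : E → ℝ} (hg : ∀ z, g (-z) = -g z) :
    ∫ x : sphere (0 : E) 1, g x ∂μ.toSphere = 0 := by
  obtain ⟨ψ, -, -, -, hpos⟩ := exists_radial_cutoff (finrank ℝ E - 1)
  have hpolar := integral_eq_integral_toSphere_mul μ (F := fun z => ψ ‖z‖ * g (‖z‖⁻¹ • z))
    (ψ := ψ) (g := fun x => g x) fun x r hr => by
      simp [norm_smul, abs_of_pos hr, smul_smul, hr.ne']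
  have hodd := integral_neg_eq_self (fun z => ψ ‖z‖ * g (‖z‖⁻¹ • z)) μ
  simp only [norm_neg, smul_neg, hg, mul_neg, integral_neg] at hodd
  rw [self_eq_neg.1 hodd.symm] at hpolar
  exact (mul_eq_zero.1 hpolar.symm).resolve_left hpos.ne'

theorem integral_trace_fderiv_toSphere {W : E → E} (hW : ContDiffOn ℝ 1 W {0}ᶜ)
    (hhom : ∀ z ≠ 0, ∀ r > (0 : ℝ), W (r • z) = r • W z) :
    ∫ x : sphere (0 : E) 1, LinearMap.trace ℝ E (fderiv ℝ W x) ∂μ.toSphere =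
      finrank ℝ E * ∫ x : sphere (0 : E) 1, ⟪(x : E), W x⟫_ℝ ∂μ.toSphere := by
  obtain ⟨ψ, hψ, hc, h0, hpos⟩ := exists_radial_cutoff (finrank ℝ E - 1)
  have hW' := hW.continuousOn_fderiv_of_isOpen isOpen_compl_singleton le_rfl
  have hTcont : ContinuousOn (fun z => LinearMap.trace ℝ E (fderiv ℝ W z)) {0}ᶜ :=
    continuous_trace_clm.comp_continuousOn hW'
  have hRcont : ContinuousOn (fun z => ⟪‖z‖⁻¹ • z, W z⟫_ℝ) {0}ᶜ :=
    ContinuousOn.inner (𝕜 := ℝ) ((continuous_norm.continuousOn.inv₀ fun z hz =>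
      norm_ne_zero_iff.2 hz).smul continuousOn_id) hW.continuousOn
  have hdiv := integral_trace_fderiv_eq_zero μ (contDiff_norm_smul hψ h0 hW)
    (hasCompactSupport_norm_smul hc)
  have hne : ∀ᵐ z ∂μ, z ≠ 0 := compl_mem_ae_iff.2 (measure_singleton 0)
  have hsplit : ∫ z, LinearMap.trace ℝ E (fderiv ℝ (fun z => ψ ‖z‖ • W z) z) ∂μ =
      ∫ z, ψ ‖z‖ • LinearMap.trace ℝ E (fderiv ℝ W z) ∂μ +
        ∫ z, deriv ψ ‖z‖ • ⟪‖z‖⁻¹ • z, W z⟫_ℝ ∂μ := by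
    rw [← integral_add (integrable_norm_smul hψ.continuous hc h0 hTcont)
      (integrable_norm_smul (hψ.continuous_deriv le_rfl) hc.deriv
        (fun h => h0 (tsupport_deriv_subset h)) hRcont)]
    refine integral_congr_ae (hne.mono fun z hz => trace_fderiv_norm_smul hψ hz ?_)
    exact (hW.differentiableOn one_ne_zero).differentiableAt (isOpen_compl_singleton.mem_nhds hz)
  have htrace := integral_eq_integral_toSphere_mul μ
    (F := fun z => ψ ‖z‖ • LinearMap.trace ℝ E (fderiv ℝ W z)) (ψ := ψ)
    (g := fun x => LinearMap.trace ℝ E (fderiv ℝ W x)) fun x r hr => by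
      simp [norm_smul, abs_of_pos hr,
        fderiv_smul_of_homogeneous hhom (ne_zero_of_mem_unit_sphere x) hr]
  have hradial := integral_eq_integral_toSphere_mul μ
    (F := fun z => deriv ψ ‖z‖ • ⟪‖z‖⁻¹ • z, W z⟫_ℝ) (ψ := fun r => r * deriv ψ r)
    (g := fun x => ⟪(x : E), W x⟫_ℝ) fun x r hr => by
      simp [norm_smul, abs_of_pos hr, smul_smul, hr.ne', hhom x (ne_zero_of_mem_unit_sphere x) r hr,
        real_inner_smul_right, mul_assoc, mul_left_comm]
  rw [hdiv, htrace, hradial, integral_Ioi_pow_mul_mul_deriv hψ hc,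
    ← Nat.cast_add_one, Nat.sub_add_cancel Module.finrank_pos] at hsplit
  refine mul_left_cancel₀ hpos.ne' ?_
  linarith

end SphereDivergence

section Minkowski

namespace IsSmoothConvexBody

variable {n : ℕ} {K : Set (Eu n)}

theorem trace_fderiv_sfn_smul_gradient (hK : IsSmoothConvexBody K) (c : Eu n) {z : Eu n}
    (hz : z ≠ 0) :
    LinearMap.trace ℝ (Eu n) (fderiv ℝ (fun z : Eu n =>
        sfn K z • (gradient (sfn K) z - (2 : ℝ) • c) + ⟪c, z⟫_ℝ • c) z) =
      ‖gradient (sfn K) z - c‖ ^ 2 + sfn K z * LinearMap.trace ℝ (Eu n) (hessA K z) := by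
  have h : HasFDerivAt (fun z : Eu n =>
      sfn K z • (gradient (sfn K) z - (2 : ℝ) • c) + ⟪c, z⟫_ℝ • c) _ z :=
    ((hK.hasFDerivAt hz).fun_smul ((hK.hasFDerivAt_gradient hz).sub_const _)).fun_add
      ((innerSL ℝ c).hasFDerivAt.smul_const c)
  rw [h.fderiv, norm_sub_sq_real]
  simp only [ContinuousLinearMap.toLinearMap_add, ContinuousLinearMap.toLinearMap_smul, map_add,
    map_smul, ContinuousLinearMap.coe_smulRight, LinearMap.trace_smulRight,
    ContinuousLinearMap.coe_coe, innerSL_apply_apply, inner_sub_right, real_inner_smul_right,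
    real_inner_self_eq_norm_sq, smul_eq_mul]
  ring

theorem integral_norm_gradient_sub_sq_add_sfn_mul_trace (hK : IsSmoothConvexBody K) (c : Eu n) :
    ∫ x : Sph n, (‖gradient (sfn K) (x : Eu n) - c‖ ^ 2 +
        sfn K x * LinearMap.trace ℝ (Eu n) (hessA K (x : Eu n))) ∂sphMeas n =
      (n + 1) * ∫ x : Sph n, (sfn K x - ⟪(x : Eu n), c⟫_ℝ) ^ 2 ∂sphMeas n := by
  have hW : ContDiffOn ℝ 1 (fun z : Eu n =>
      sfn K z • (gradient (sfn K) z - (2 : ℝ) • c) + ⟪c, z⟫_ℝ • c) {0}ᶜ := fun z hz => by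
    have hh : ContDiffAt ℝ 1 (sfn K) z := (hK.contDiffAt hz).of_le (by simp)
    have hX : ContDiffAt ℝ 1 (gradient (sfn K)) z := (hK.contDiffAt_gradient hz).of_le (by simp)
    exact ((hh.smul (hX.sub contDiffAt_const)).add
      ((contDiffAt_const.inner ℝ contDiffAt_id).smul contDiffAt_const)).contDiffWithinAt
  have hdiv := integral_trace_fderiv_toSphere volume hW fun z hz r hr => by
    simp only [sfn_smul K z hr.le, hK.gradient_smul hz hr, inner_smul_right, smul_add, smul_smul]
  rw [finrank_euclideanSpace_fin, Nat.cast_add_one] at hdiv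
  calc _ = _ := integral_congr_ae (ae_of_all _ fun x =>
        (hK.trace_fderiv_sfn_smul_gradient c (ne_zero_of_mem_unit_sphere x)).symm)
    _ = _ := hdiv
    _ = _ := by
      congr 1
      refine integral_congr_ae (ae_of_all _ fun x => ?_)
      simp only [inner_add_right, inner_sub_right, real_inner_smul_right,
        hK.inner_gradient (ne_zero_of_mem_unit_sphere x), real_inner_comm (x : Eu n) c]
      ring

end IsSmoothConvexBody

end Minkowski

section Stability

theorem integral_sub_average_sq {α : Type*} [MeasurableSpace α] {μ : Measure α} [IsFiniteMeasure μ]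
    {f : α → ℝ} (hf : Integrable f μ) (hf2 : Integrable (fun x => f x ^ 2) μ) :
    ∫ x, (f x - ⨍ y, f y ∂μ) ^ 2 ∂μ =
      ∫ x, f x ^ 2 ∂μ - μ.real Set.univ * (⨍ x, f x ∂μ) ^ 2 := by
  have hmean : ∫ x, f x ∂μ = μ.real Set.univ * ⨍ x, f x ∂μ := (measure_smul_average μ f).symm
  simp only [sub_sq]
  have hlin : Integrable (fun x => 2 * f x * ⨍ y, f y ∂μ) μ := (hf.const_mul 2).mul_const _
  rw [integral_add (f := fun x => f x ^ 2 - 2 * f x * ⨍ y, f y ∂μ) (hf2.sub hlin)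
    (integrable_const _), integral_sub hf2 hlin, integral_mul_const, integral_const_mul,
    integral_const, hmean, smul_eq_mul]
  ring

namespace IsSmoothConvexBody

variable {n : ℕ} {K : Set (Eu n)}

theorem integral_tsfn_pos (hK : IsSmoothConvexBody K) : 0 < ∫ x : Sph n, tsfn K x ∂sphMeas n := by
  obtain ⟨x⟩ : Nonempty (Sph n) := inferInstance
  have hodd : ∫ x : Sph n, ⟪(x : Eu n), cK K⟫_ℝ ∂sphMeas n = 0 :=
    integral_toSphere_eq_zero_of_odd volume (g := fun z => ⟪z, cK K⟫_ℝ) fun z => inner_neg_left z _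
  simp only [tsfn]
  rw [integral_sub (integrable_sphMeas hK.continuous_sfn) (integrable_sphMeas (by fun_prop)), hodd,
    sub_zero]
  exact integral_pos_of_integrable_nonneg_nonzero (x := x) hK.continuous_sfn
    (integrable_sphMeas hK.continuous_sfn) (fun y => (hK.pos y).le) (hK.pos x).ne'

theorem average_tsfn_pos (hK : IsSmoothConvexBody K) : 0 < ⨍ x : Sph n, tsfn K x ∂sphMeas n := by
  rw [average_eq, smul_eq_mul]
  exact mul_pos (inv_pos.2 (measureReal_univ_pos (μ := sphMeas n)))
    hK.integral_tsfn_pos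

theorem trace_hessA_nonneg (hK : IsSmoothConvexBody K) (x : Sph n) :
    0 ≤ LinearMap.trace ℝ (Eu n) (hessA K (x : Eu n)) := by
  let b := EuclideanSpace.basisFun (Fin (n + 1)) ℝ
  rw [LinearMap.trace_eq_sum_inner _ b]
  exact Finset.sum_nonneg fun i _ => real_inner_comm (b i) _ ▸ hK.inner_hessA_self_nonneg x (b i)

theorem natCast_mul_mul_integral_norm_gradient_sub_cK_sq_le (hK : IsSmoothConvexBody K) {M m : ℝ}
    (hm : ∀ x : Sph n, m ≤ dens K (x : Eu n)) (hM : ∀ x : Sph n, dens K (x : Eu n) ≤ M) :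
    n * (m * ∫ x : Sph n, ‖gradient (sfn K) (x : Eu n) - cK K‖ ^ 2 ∂sphMeas n) ≤
      M * ∫ x : Sph n, sfn K x * LinearMap.trace ℝ (Eu n) (hessA K (x : Eu n)) ∂sphMeas n := by
  have hX := hK.continuous_gradient
  have hh := hK.continuous_sfn
  have hdens := hK.continuous_dens
  have htr := continuous_trace_clm.comp hK.continuous_hessA
  simp only [← integral_const_mul m, ← integral_const_mul M]
  calc _ ≤ n * ∫ x : Sph n, ‖gradient (sfn K) (x : Eu n) - cK K‖ ^ 2 * dens K x ∂sphMeas n := by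
        refine mul_le_mul_of_nonneg_left (integral_mono (integrable_sphMeas (by fun_prop))
          (integrable_sphMeas (by fun_prop)) fun x => ?_) n.cast_nonneg
        exact mul_comm m _ ▸ mul_le_mul_of_nonneg_left (hm x) (sq_nonneg _)
    _ ≤ ∫ x : Sph n, sfn K x * LinearMap.trace ℝ (Eu n) (hessA K (x : Eu n)) * dens K x
          ∂sphMeas n := hK.natCast_mul_integral_norm_gradient_sub_cK_sq_le
    _ ≤ _ := by
        refine integral_mono (integrable_sphMeas ((hh.mul htr).mul hdens))
          (integrable_sphMeas (continuous_const.mul (hh.mul htr))) fun x => ?_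
        exact mul_comm M _ ▸ mul_le_mul_of_nonneg_left (hM x)
          (mul_nonneg (hK.pos x).le (hK.trace_hessA_nonneg x))

theorem natCast_mul_add_mul_integral_norm_gradient_sub_cK_sq_le (hK : IsSmoothConvexBody K)
    {M m : ℝ} (hm : ∀ x : Sph n, m ≤ dens K (x : Eu n)) (hM : ∀ x : Sph n, dens K (x : Eu n) ≤ M) :
    (n * m + M) * ∫ x : Sph n, ‖gradient (sfn K) (x : Eu n) - cK K‖ ^ 2 ∂sphMeas n ≤
      M * ((n + 1) * ∫ x : Sph n, tsfn K x ^ 2 ∂sphMeas n) := by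
  have hX := hK.continuous_gradient
  have htr : Continuous fun x : Sph n =>
      sfn K x * LinearMap.trace ℝ (Eu n) (hessA K (x : Eu n)) :=
    hK.continuous_sfn.mul (continuous_trace_clm.comp hK.continuous_hessA)
  have hbody := hK.natCast_mul_mul_integral_norm_gradient_sub_cK_sq_le hm hM
  have hdiv := hK.integral_norm_gradient_sub_sq_add_sfn_mul_trace (cK K)
  rw [integral_add (integrable_sphMeas (by fun_prop)) (integrable_sphMeas htr)] at hdiv
  simp only [tsfn]
  rw [← hdiv]
  linarith

theorem succ_mul_mul_integral_tsfn_sub_average_sq_le (hK : IsSmoothConvexBody K) (hn : 1 ≤ n)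
    {M m : ℝ} (hm0 : 0 < m) (hm : ∀ x : Sph n, m ≤ dens K (x : Eu n))
    (hM : ∀ x : Sph n, dens K (x : Eu n) ≤ M) :
    (n + 1) * (m * ∫ x : Sph n, (tsfn K x - ⨍ y : Sph n, tsfn K y ∂sphMeas n) ^ 2 ∂sphMeas n) ≤
      (M - m) * ((sphMeas n).real Set.univ * (⨍ x : Sph n, tsfn K x ∂sphMeas n) ^ 2) := by
  have hX := hK.continuous_gradient
  have ht := hK.continuous_tsfn
  have hM0 : 0 ≤ M := hm0.le.trans ((hm (Classical.arbitrary _)).trans (hM _))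
  have hn0 : (0 : ℝ) < n := mod_cast hn
  have hvar := integral_sub_average_sq (μ := sphMeas n) (f := fun x : Sph n => tsfn K x)
    (integrable_sphMeas ht) (integrable_sphMeas (by fun_prop))
  have hsphere := hK.natCast_mul_integral_tsfn_sub_sq_le (integral_sub_average (sphMeas n) _)
  have hbody := hK.natCast_mul_add_mul_integral_norm_gradient_sub_cK_sq_le hm hM
  rw [integral_sub (integrable_sphMeas (by fun_prop)) (integrable_sphMeas (by fun_prop))] at hsphere
  set E := ∫ x : Sph n, (tsfn K x - ⨍ y : Sph n, tsfn K y ∂sphMeas n) ^ 2 ∂sphMeas n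
  set H := ∫ x : Sph n, tsfn K x ^ 2 ∂sphMeas n
  have hcombine : (n * m + M) * (H + n * E) ≤ M * ((n + 1) * H) :=
    hbody.trans' (mul_le_mul_of_nonneg_left (by linarith) (by positivity))
  have hcancel : (n * m + M) * E ≤ (M - m) * H := le_of_mul_le_mul_left (by linarith) hn0
  rw [eq_sub_iff_add_eq] at hvar
  rw [← hvar] at hcancel
  linarith

theorem succ_mul_average_tsfn_div_average_sub_one_sq_le (hK : IsSmoothConvexBody K) (hn : 1 ≤ n)
    {M m : ℝ} (hm0 : 0 < m) (hm : ∀ x : Sph n, m ≤ dens K (x : Eu n))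
    (hM : ∀ x : Sph n, dens K (x : Eu n) ≤ M) :
    (n + 1) * ⨍ x : Sph n, (tsfn K x / (⨍ y : Sph n, tsfn K y ∂sphMeas n) - 1) ^ 2 ∂sphMeas n ≤
      M / m - 1 := by
  have ha := hK.average_tsfn_pos
  have hW : 0 < (sphMeas n).real Set.univ := measureReal_univ_pos
  have h := hK.succ_mul_mul_integral_tsfn_sub_average_sq_le hn hm0 hm hM
  set a := ⨍ x : Sph n, tsfn K x ∂sphMeas n
  have hsq : ∀ x : Sph n, (tsfn K x / a - 1) ^ 2 = (tsfn K x - a) ^ 2 / a ^ 2 := fun x => by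
    rw [← div_pow, sub_div, div_self ha.ne']
  have hmM : m ≤ M := (hm (Classical.arbitrary _)).trans (hM _)
  simp only [hsq, average_eq, integral_div, smul_eq_mul]
  calc _ = (n + 1) * (m * ∫ x : Sph n, (tsfn K x - a) ^ 2 ∂sphMeas n) /
        ((sphMeas n).real Set.univ * a ^ 2) / m := by field_simp
    _ ≤ (M - m) / m := by
        gcongr
        exact div_le_of_le_mul₀ (by positivity) (sub_nonneg.2 hmM) h
    _ = M / m - 1 := by rw [sub_div, div_self hm0.ne']

end IsSmoothConvexBody

end Stability

/-- **Stability of the cone-volume measure with near constant density.** There is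
`γ = γ(n) > 0` such that `δ₂(K̄, B) ≤ γ (M/m − 1)^{1/2}`, where `M = max h/𝒦`,
`m = min h/𝒦`, and `K̄ = (K − c(K))/(⨍ h̃ dθ)` has support function `h̃ / ⨍ h̃ dθ`. -/
theorem stability_of_cone_volume_measure (n : ℕ) (hn : 1 ≤ n) :
    ∃ γ : ℝ, 0 < γ ∧
      ∀ K : Set (Eu n), IsSmoothConvexBody K →
        ∀ M m : ℝ,
          IsGreatest (Set.range fun x : Sph n => dens K (x : Eu n)) M →
          IsLeast (Set.range fun x : Sph n => dens K (x : Eu n)) m →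
          Real.sqrt (⨍ x : Sph n,
              (tsfn K (x : Eu n) / (⨍ y : Sph n, tsfn K (y : Eu n) ∂sphMeas n) - 1) ^ 2
                ∂sphMeas n) ≤
            γ * Real.sqrt (M / m - 1) := by
  refine ⟨√(n + 1 : ℝ)⁻¹, by positivity, fun K hK M m hM hm => ?_⟩
  obtain ⟨x, rfl⟩ := hm.1
  have h := hK.succ_mul_average_tsfn_div_average_sub_one_sq_le hn (hK.dens_pos x)
    (fun y => hm.2 ⟨y, rfl⟩) (fun y => hM.2 ⟨y, rfl⟩)
  rw [← Real.sqrt_mul (by positivity)]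
  exact Real.sqrt_le_sqrt ((le_inv_mul_iff₀ (by positivity)).2 h)
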